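/- Let d > 3 be an integer, ε ≠ 0 and τ ≥ 0. Let V : ℝ^d → ℝ be nonnegative, continuously differentiable away from the origin, with γ·V(x) + |x|·∂_rV(x) ≤ (1−η)(d−1)(d−3)/(2|x|²) for some γ > 0, η > 0 and all x ≠ 0. If u is a classical solution of −Δu + V u ± iεu − τu = f with u, ∇u ∈ L²(ℝ^d) and f ∈ L²(ℝ^d), then ‖∇u‖²_X + τ‖u‖²_X + ∫_{ℝ^d} (V(x)/|x|)|u(x)|² dx + sup_{R>0} R^{−3}∫_{B(0,R)} |u(x)|² dx + ‖V^{1/2}u‖²_X + (d−3)∫_{ℝ^d} |u(x)|²/|x|³ dx ≤ C‖f‖²_{X*} + (1/2)|ε|·‖u‖²_X, with C depending only on d, γ, η. -/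

import Mathlib

noncomputable section
open MeasureTheory Metric Set ENNReal

abbrev Ed (d : ℕ) := EuclideanSpace ℝ (Fin d)

/-- partial derivative of a complex valued function -/
def pd {d : ℕ} (u : Ed d → ℂ) (i : Fin d) (x : Ed d) : ℂ :=
  fderiv ℝ u x (EuclideanSpace.single i 1)

/-- Laplacian of a complex valued function -/
def lap {d : ℕ} (u : Ed d → ℂ) (x : Ed d) : ℂ :=
  ∑ i, fderiv ℝ (pd u i) x (EuclideanSpace.single i 1)

/-- squared norm of the gradient, as an extended nonnegative real -/
def gradSq {d : ℕ} (u : Ed d → ℂ) (x : Ed d) : ℝ≥0∞ :=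
  ∑ i, (‖pd u i x‖₊ : ℝ≥0∞) ^ 2

/-- |u(x)|² as an extended nonnegative real -/
def usq {d : ℕ} (u : Ed d → ℂ) (x : Ed d) : ℝ≥0∞ := (‖u x‖₊ : ℝ≥0∞) ^ 2

/-- radial derivative ∂_r V (x) = (x/|x|)·∇V(x) -/
def radialDeriv {d : ℕ} (V : Ed d → ℝ) (x : Ed d) : ℝ :=
  fderiv ℝ V x x / ‖x‖

/-- Morrey–Campanato type quantity sup_{R>0} (1/R) ∫_{B(0,R)} g -/
def nX2 {d : ℕ} (g : Ed d → ℝ≥0∞) : ℝ≥0∞ :=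
  ⨆ (R : ℝ) (_ : 0 < R), (ENNReal.ofReal R)⁻¹ * ∫⁻ x in ball (0 : Ed d) R, g x

/-- dyadic shell C_j -/
def shell (d : ℕ) (j : ℤ) : Set (Ed d) := {x | (2:ℝ)^j < ‖x‖ ∧ ‖x‖ ≤ (2:ℝ)^(j+1)}

/-- the dual norm ‖f‖_{X*} applied to g = |f|² -/
def nXstar {d : ℕ} (g : Ed d → ℝ≥0∞) : ℝ≥0∞ :=
  ∑' j : ℤ, (ENNReal.ofReal ((2:ℝ)^(j+1)) * ∫⁻ x in shell d j, g x) ^ (1/2 : ℝ)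

/-- the index j₀ with 2^{j₀} < ρ ≤ 2^{j₀+1} -/
def jIdx (ρ : ℝ) : ℤ := ⌈Real.logb 2 ρ⌉ - 1

/-- sup_{R ≥ ρ} (1/R)∫_{B(0,R)} g -/
def nX2r {d : ℕ} (ρ : ℝ) (g : Ed d → ℝ≥0∞) : ℝ≥0∞ :=
  ⨆ (R : ℝ) (_ : ρ ≤ R), (ENNReal.ofReal R)⁻¹ * ∫⁻ x in ball (0 : Ed d) R, g x

/-- the dual norm ‖f‖_{X*_ρ} applied to g = |f|² -/
def nXstarr {d : ℕ} (ρ : ℝ) (g : Ed d → ℝ≥0∞) : ℝ≥0∞ :=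
  (∑' j : {j : ℤ // jIdx ρ ≤ j},
    (ENNReal.ofReal ((2:ℝ)^((j:ℤ)+1)) * ∫⁻ x in shell d (j:ℤ), g x) ^ (1/2 : ℝ))
  + (ENNReal.ofReal ρ * ∫⁻ x in ball (0 : Ed d) ρ, g x) ^ (1/2 : ℝ)

/-- integral of g over the sphere of radius R w.r.t. (d-1)-dimensional Hausdorff measure -/
def sphInt {d : ℕ} (R : ℝ) (g : Ed d → ℝ≥0∞) : ℝ≥0∞ :=
  ∫⁻ x in Metric.sphere (0 : Ed d) R, g x ∂(μH[(d:ℝ) - 1])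

/-!
Multiply the equation by `k (x·∇ū + (d-1)/2 ū)` with the weight
`k = |x|⁻¹ + δ (R² + |x|²)^(-1/2)`, take real parts and integrate. By the repulsivity of `V` the
first summand of `k` controls `∫ V |u|² / |x|` and `∫ |u|² / |x|³`, while the second one controls
`|∇u|²` and `τ |u|²` on the ball of radius `R`; for small `δ` its terms of the wrong sign are
absorbed by the first. The vector fields involved are singular at the origin and decay slowly at
infinity, and cutoffs in `log |x|` keep the boundary contributions negligible at both ends.

On the right, the pairings of `f` with `∇u` and `u / |x|` are bounded by the duality of `X` and
`X*`, and the remaining term `|ε| ∫ |u| |∇u|` by the charge and energy identities, that is, the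
imaginary and real parts of the equation tested against `ū`. Young's inequality then absorbs
everything on the left except `|ε| ‖u‖²_X / 2`.
-/

open Filter Topology
open scoped InnerProductSpace

section Cutoff

variable {E : Type*} [NormedAddCommGroup E]

/-- A fixed smooth bump on the line, equal to `1` on `[-1, 1]` and supported in `[-2, 2]`. -/
def lineBump : ContDiffBump (0 : ℝ) := ⟨1, 2, one_pos, one_lt_two⟩

/-- The logarithmic cutoff `lineBump (log ‖x‖² / (n + 1))`, set to `0` at the origin, where
`Real.log 0 = 0` would give the value `1`. These functions vanish near `0` and near infinity and
exhaust `E \ {0}` as `n → ∞`, with `‖x‖ ‖∇‖` tending to `0` uniformly. -/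
def logCutoff (n : ℕ) (x : E) : ℝ :=
  open Classical in if x = 0 then 0 else lineBump (Real.log (‖x‖ ^ 2) / (n + 1))

lemma logCutoff_of_ne_zero (n : ℕ) {x : E} (hx : x ≠ 0) :
    logCutoff n x = lineBump (Real.log (‖x‖ ^ 2) / (n + 1)) :=
  if_neg hx

lemma logCutoff_nonneg (n : ℕ) (x : E) : 0 ≤ logCutoff n x := by
  unfold logCutoff
  split_ifs
  exacts [le_rfl, lineBump.nonneg]

lemma logCutoff_le_one (n : ℕ) (x : E) : logCutoff n x ≤ 1 := by
  unfold logCutoff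
  split_ifs
  exacts [zero_le_one, lineBump.le_one]

lemma norm_logCutoff_le_one (n : ℕ) (x : E) : ‖logCutoff n x‖ ≤ 1 := by
  rw [Real.norm_of_nonneg (logCutoff_nonneg n x)]
  exact logCutoff_le_one n x

lemma eventually_logCutoff_eq_one {x : E} (hx : x ≠ 0) : ∀ᶠ n in atTop, logCutoff n x = 1 := by
  filter_upwards [eventually_ge_atTop ⌈|Real.log (‖x‖ ^ 2)|⌉₊] with n hn
  have hlog : |Real.log (‖x‖ ^ 2)| ≤ n := (Nat.le_ceil _).trans (by exact_mod_cast hn)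
  rw [logCutoff_of_ne_zero n hx]
  apply lineBump.one_of_mem_closedBall
  have hn : (0 : ℝ) < n + 1 := by positivity
  rw [mem_closedBall_zero_iff, Real.norm_eq_abs, abs_div, abs_of_pos hn, div_le_iff₀ hn]
  change _ ≤ (1 : ℝ) * _
  linarith

/-- The closed annulus of all `x` with `|log ‖x‖²| ≤ 2 (n + 1)`; it contains the support of
`logCutoff n`. -/
def cutoffAnnulus (E : Type*) [NormedAddCommGroup E] (n : ℕ) : Set E :=
  {x | ‖x‖ ^ 2 ∈ Icc (Real.exp (-(2 * (n + 1)))) (Real.exp (2 * (n + 1)))}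

lemma isClosed_cutoffAnnulus (n : ℕ) : IsClosed (cutoffAnnulus E n) :=
  isClosed_Icc.preimage (continuous_norm.pow 2)

lemma zero_notMem_cutoffAnnulus (n : ℕ) : (0 : E) ∉ cutoffAnnulus E n := fun h => by
  have h0 := h.1
  rw [norm_zero, zero_pow two_ne_zero] at h0
  exact h0.not_gt (Real.exp_pos _)

lemma tsupport_logCutoff_subset (n : ℕ) :
    tsupport (logCutoff n : E → ℝ) ⊆ cutoffAnnulus E n := by
  refine closure_minimal (fun x hx => ?_) (isClosed_cutoffAnnulus n)
  have hx0 : x ≠ 0 := by rintro rfl; simp [logCutoff] at hx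
  have hmem : Real.log (‖x‖ ^ 2) / (n + 1) ∈ Function.support lineBump := by
    rwa [Function.mem_support, logCutoff_of_ne_zero n hx0] at hx
  rw [lineBump.support_eq, mem_ball_zero_iff, Real.norm_eq_abs, abs_lt] at hmem
  change -2 < _ ∧ _ < (2 : ℝ) at hmem
  rw [lt_div_iff₀ (by positivity), div_lt_iff₀ (by positivity)] at hmem
  have hpos : 0 < ‖x‖ ^ 2 := by positivity
  constructor
  · rw [← Real.le_log_iff_exp_le hpos]; linarith
  · rw [← Real.log_le_iff_le_exp hpos]; linarith

lemma zero_notMem_tsupport_logCutoff (n : ℕ) : (0 : E) ∉ tsupport (logCutoff n) :=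
  fun h => zero_notMem_cutoffAnnulus n (tsupport_logCutoff_subset n h)

lemma hasCompactSupport_logCutoff [ProperSpace E] (n : ℕ) :
    HasCompactSupport (logCutoff n : E → ℝ) := by
  have hbdd : cutoffAnnulus E n ⊆ closedBall 0 (Real.exp (2 * (n + 1)) + 1) := fun x hx => by
    rw [mem_closedBall_zero_iff]
    nlinarith [hx.2, norm_nonneg x]
  exact ((isCompact_closedBall _ _).of_isClosed_subset (isClosed_cutoffAnnulus n) hbdd
    ).of_isClosed_subset (isClosed_tsupport _) (tsupport_logCutoff_subset n)

lemma logCutoff_eventuallyEq (n : ℕ) {x : E} (hx : x ≠ 0) :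
    logCutoff n =ᶠ[𝓝 x] fun y => lineBump (Real.log (‖y‖ ^ 2) / (n + 1)) := by
  filter_upwards [isOpen_ne.mem_nhds hx] with y hy using logCutoff_of_ne_zero n hy

variable [InnerProductSpace ℝ E]

lemma contDiff_logCutoff (n : ℕ) : ContDiff ℝ 1 (logCutoff n : E → ℝ) := by
  rw [contDiff_iff_contDiffAt]
  intro x
  rcases eq_or_ne x 0 with rfl | hx
  · exact contDiffAt_const.congr_of_eventuallyEq
      (notMem_tsupport_iff_eventuallyEq.1 (zero_notMem_tsupport_logCutoff n))
  · refine ContDiffAt.congr_of_eventuallyEq ?_ (logCutoff_eventuallyEq n hx)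
    exact lineBump.contDiff.contDiffAt.comp x
      (((contDiff_norm_sq ℝ).contDiffAt.log (by positivity)).div_const _)

lemma exists_abs_fderiv_logCutoff_le : ∃ M : ℝ, ∀ (n : ℕ) (x v : E),
    |fderiv ℝ (logCutoff n) x v| * ‖x‖ ≤ M / (n + 1) * ‖v‖ := by
  have hbump : ContDiff ℝ 1 lineBump := lineBump.contDiff
  obtain ⟨M, hM⟩ := (hbump.continuous_deriv le_rfl).bounded_above_of_compact_support
    lineBump.hasCompactSupport.deriv
  refine ⟨2 * M, fun n x v => ?_⟩
  have hM0 : 0 ≤ M := (norm_nonneg _).trans (hM 0)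
  rcases eq_or_ne x 0 with rfl | hx
  · rw [norm_zero, mul_zero]
    positivity
  set s := Real.log (‖x‖ ^ 2) / ((n : ℝ) + 1)
  have hderiv : fderiv ℝ (logCutoff n) x v =
      deriv lineBump s * (2 * ⟪x, v⟫_ℝ / ‖x‖ ^ 2 / (n + 1)) := by
    have hinner : HasFDerivAt (fun y : E => Real.log (‖y‖ ^ 2) / ((n : ℝ) + 1)) _ x :=
      ((hasStrictFDerivAt_norm_sq x).hasFDerivAt.log (by positivity)).mul_const ((n : ℝ) + 1)⁻¹
    have hcomp := ((hbump.differentiable one_ne_zero) s).hasDerivAt.comp_hasFDerivAt x hinner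
    rw [(hcomp.congr_of_eventuallyEq (logCutoff_eventuallyEq n hx)).fderiv]
    simp only [smul_apply, innerSL_apply_apply, smul_eq_mul, nsmul_eq_mul]
    push_cast
    ring
  have hxpos : 0 < ‖x‖ := norm_pos_iff.2 hx
  calc |fderiv ℝ (logCutoff n) x v| * ‖x‖
      = |deriv lineBump s| * (2 * (|⟪x, v⟫_ℝ| / ‖x‖) / (n + 1)) := by
        rw [hderiv]
        simp only [abs_mul, abs_div, abs_two, abs_pow, abs_norm,
          abs_of_pos (by positivity : (0 : ℝ) < n + 1)]
        field_simp
    _ ≤ M * (2 * ‖v‖ / (n + 1)) := by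
        have hcs : |⟪x, v⟫_ℝ| / ‖x‖ ≤ ‖v‖ := by
          rw [div_le_iff₀ hxpos, mul_comm]
          exact abs_real_inner_le_norm x v
        gcongr
        exact hM s
    _ = 2 * M / (n + 1) * ‖v‖ := by ring

end Cutoff

section Divergence

variable {E : Type*} [NormedAddCommGroup E] [MeasurableSpace E] {μ : Measure E}

lemma lintegral_ofReal_le_liminf_logCutoff_mul [NullSingletonClass μ] {A : E → ℝ}
    (hA : ∀ n, Integrable (fun x => logCutoff n x * A x) μ) (hA0 : ∀ x, x ≠ 0 → 0 ≤ A x) :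
    ∫⁻ x, .ofReal (A x) ∂μ ≤
      liminf (fun n => ENNReal.ofReal (∫ x, logCutoff n x * A x ∂μ)) atTop := by
  calc ∫⁻ x, .ofReal (A x) ∂μ
      = ∫⁻ x, liminf (fun n => ENNReal.ofReal (logCutoff n x * A x)) atTop ∂μ := by
        refine lintegral_congr_ae ?_
        filter_upwards [μ.ae_ne 0] with x hx
        refine (Tendsto.liminf_eq (tendsto_const_nhds.congr' ?_)).symm
        filter_upwards [eventually_logCutoff_eq_one hx] with n hn
        rw [hn, one_mul]
    _ ≤ liminf (fun n => ∫⁻ x, ENNReal.ofReal (logCutoff n x * A x) ∂μ) atTop :=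
        lintegral_liminf_le' fun n => (hA n).aestronglyMeasurable.aemeasurable.ennreal_ofReal
    _ = liminf (fun n => ENNReal.ofReal (∫ x, logCutoff n x * A x ∂μ)) atTop := by
        congr! 2 with n
        refine (ofReal_integral_eq_lintegral_ofReal (hA n) ?_).symm
        filter_upwards [μ.ae_ne 0] with x hx
        exact mul_nonneg (logCutoff_nonneg n x) (hA0 x hx)

variable [BorelSpace E]

lemma integrable_mul_of_continuousOn_compl_zero [IsFiniteMeasureOnCompacts μ] {ζ g : E → ℝ}
    (hζ : Continuous ζ) (hsupp : HasCompactSupport ζ) (hzero : 0 ∉ tsupport ζ)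
    (hg : ContinuousOn g {0}ᶜ) : Integrable (fun x => ζ x * g x) μ := by
  refine Continuous.integrable_of_hasCompactSupport ?_ hsupp.mul_right
  rw [continuous_iff_continuousAt]
  intro x
  rcases eq_or_ne x 0 with rfl | hx
  · have hvanish : (fun x => ζ x * g x) =ᶠ[𝓝 0] fun _ => 0 := by
      filter_upwards [notMem_tsupport_iff_eventuallyEq.1 hzero] with y hy
      rw [hy, Pi.zero_apply, zero_mul]
    exact continuousAt_const.congr hvanish.symm
  · exact hζ.continuousAt.mul (hg.continuousAt (isOpen_compl_singleton.mem_nhds hx))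

variable [InnerProductSpace ℝ E]

lemma integrable_logCutoff_mul {B : E → ℝ} (hB : Integrable B μ) (n : ℕ) :
    Integrable (fun x => logCutoff n x * B x) μ :=
  hB.bdd_mul (c := 1) (contDiff_logCutoff n).continuous.aestronglyMeasurable
    (ae_of_all _ (norm_logCutoff_le_one n))

lemma tendsto_integral_logCutoff_mul [NullSingletonClass μ] {B : E → ℝ} (hB : Integrable B μ) :
    Tendsto (fun n => ∫ x, logCutoff n x * B x ∂μ) atTop (𝓝 (∫ x, B x ∂μ)) := by
  refine tendsto_integral_of_dominated_convergence (fun x => ‖B x‖)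
    (fun n => (integrable_logCutoff_mul hB n).aestronglyMeasurable) hB.norm
    (fun n => ae_of_all _ fun x => ?_) ?_
  · rw [norm_mul]
    exact mul_le_of_le_one_left (norm_nonneg _) (norm_logCutoff_le_one n x)
  · filter_upwards [μ.ae_ne 0] with x hx
    refine tendsto_const_nhds.congr' ?_
    filter_upwards [eventually_logCutoff_eq_one hx] with n hn
    rw [hn, one_mul]

variable [FiniteDimensional ℝ E]

lemma integrable_logCutoff_mul_fderiv [IsFiniteMeasureOnCompacts μ] {P : E → ℝ}
    (hP : ContDiffOn ℝ 1 P {0}ᶜ) (n : ℕ) (v : E) :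
    Integrable (fun x => logCutoff n x * fderiv ℝ P x v) μ :=
  have : ProperSpace E := FiniteDimensional.proper ℝ E
  integrable_mul_of_continuousOn_compl_zero (contDiff_logCutoff n).continuous
    (hasCompactSupport_logCutoff n) (zero_notMem_tsupport_logCutoff n)
    ((hP.continuousOn_fderiv_of_isOpen isOpen_compl_singleton le_rfl).clm_apply continuousOn_const)

lemma integrable_fderiv_logCutoff_mul [IsFiniteMeasureOnCompacts μ] {P : E → ℝ}
    (hP : ContinuousOn P {0}ᶜ) (n : ℕ) (v : E) :
    Integrable (fun x => fderiv ℝ (logCutoff n) x v * P x) μ := by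
  have : ProperSpace E := FiniteDimensional.proper ℝ E
  have hsupp := tsupport_fderiv_apply_subset ℝ (f := (logCutoff n : E → ℝ)) v
  exact integrable_mul_of_continuousOn_compl_zero
    (((contDiff_logCutoff n).continuous_fderiv one_ne_zero).clm_apply continuous_const)
    ((hasCompactSupport_logCutoff n).of_isClosed_subset (isClosed_tsupport _) hsupp)
    (fun h => zero_notMem_tsupport_logCutoff n (hsupp h)) hP

lemma integral_logCutoff_mul_fderiv [μ.IsAddHaarMeasure] {P : E → ℝ}
    (hP : ContDiffOn ℝ 1 P {0}ᶜ) (n : ℕ) (v : E) :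
    ∫ x, logCutoff n x * fderiv ℝ P x v ∂μ = -∫ x, fderiv ℝ (logCutoff n) x v * P x ∂μ := by
  have : ProperSpace E := FiniteDimensional.proper ℝ E
  refine integral_mul_fderiv_eq_neg_fderiv_mul_of_integrable
    (integrable_fderiv_logCutoff_mul hP.continuousOn n v) (integrable_logCutoff_mul_fderiv hP n v)
    (integrable_mul_of_continuousOn_compl_zero (contDiff_logCutoff n).continuous
      (hasCompactSupport_logCutoff n) (zero_notMem_tsupport_logCutoff n) hP.continuousOn)
    (fun x _ => (contDiff_logCutoff n).differentiable one_ne_zero x) fun x hx => ?_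
  have hx0 : x ≠ 0 := fun h => zero_notMem_tsupport_logCutoff n (h ▸ hx)
  exact (hP.contDiffAt (isOpen_compl_singleton.mem_nhds hx0)).differentiableAt one_ne_zero

lemma exists_integral_logCutoff_mul_fderiv_le [Nontrivial E] [μ.IsAddHaarMeasure] {P : E → ℝ}
    (hP : ContDiffOn ℝ 1 P {0}ᶜ) (hPint : Integrable (fun x => P x / ‖x‖) μ) (v : E) :
    ∃ K : ℝ, ∀ n, ∫ x, logCutoff n x * fderiv ℝ P x v ∂μ ≤ K / (n + 1) := by
  obtain ⟨M, hM⟩ := exists_abs_fderiv_logCutoff_le (E := E)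
  refine ⟨M * ‖v‖ * ∫ x, |P x / ‖x‖| ∂μ, fun n => ?_⟩
  rw [integral_logCutoff_mul_fderiv hP, ← integral_neg, mul_div_right_comm, ← integral_const_mul]
  refine integral_mono_ae (integrable_fderiv_logCutoff_mul hP.continuousOn n v).neg
    (hPint.abs.const_mul _) ?_
  filter_upwards [μ.ae_ne 0] with x hx
  calc -(fderiv ℝ (logCutoff n) x v * P x) ≤ |fderiv ℝ (logCutoff n) x v * P x| := neg_le_abs _
    _ = |fderiv ℝ (logCutoff n) x v| * ‖x‖ * |P x / ‖x‖| := by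
        rw [abs_mul, abs_div, abs_norm]; field_simp
    _ ≤ M / (n + 1) * ‖v‖ * |P x / ‖x‖| :=
        mul_le_mul_of_nonneg_right (hM n x v) (abs_nonneg _)
    _ = M * ‖v‖ / (n + 1) * |P x / ‖x‖| := by ring

theorem lintegral_ofReal_le_of_sum_fderiv_eq_sub [Nontrivial E] [μ.IsAddHaarMeasure] {ι : Type*}
    [Fintype ι] {v : ι → E} {P : ι → E → ℝ} {A B : E → ℝ}
    (hP : ∀ i, ContDiffOn ℝ 1 (P i) {0}ᶜ) (hPint : ∀ i, Integrable (fun x => P i x / ‖x‖) μ)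
    (hA : ∀ x, x ≠ 0 → 0 ≤ A x) (hB : Integrable B μ)
    (hdiv : ∀ x, x ≠ 0 → ∑ i, fderiv ℝ (P i) x (v i) = A x - B x) :
    ∫⁻ x, .ofReal (A x) ∂μ ≤ .ofReal (∫ x, B x ∂μ) := by
  choose K hK using fun i => exists_integral_logCutoff_mul_fderiv_le (hP i) (hPint i) (v i)
  have hA_eq : ∀ n, (fun x => logCutoff n x * A x) =ᵐ[μ]
      fun x => (∑ i, logCutoff n x * fderiv ℝ (P i) x (v i)) + logCutoff n x * B x := fun n => by
    filter_upwards [μ.ae_ne 0] with x hx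
    rw [← Finset.mul_sum, hdiv x hx]
    ring
  have hsum : ∀ n, Integrable (fun x => ∑ i, logCutoff n x * fderiv ℝ (P i) x (v i)) μ :=
    fun n => integrable_finsetSum _ fun i _ => integrable_logCutoff_mul_fderiv (hP i) n (v i)
  have hle : ∀ n : ℕ, ∫ x, logCutoff n x * A x ∂μ ≤
      (∑ i, K i) / (n + 1) + ∫ x, logCutoff n x * B x ∂μ := fun n => by
    rw [integral_congr_ae (hA_eq n), integral_add (hsum n) (integrable_logCutoff_mul hB n),
      integral_finsetSum _ fun i _ => integrable_logCutoff_mul_fderiv (hP i) n (v i),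
      Finset.sum_div]
    gcongr with i
    exact hK i n
  have hlim : Tendsto (fun n : ℕ => (∑ i, K i) / ((n : ℝ) + 1) + ∫ x, logCutoff n x * B x ∂μ)
      atTop (𝓝 (∫ x, B x ∂μ)) := by
    simpa [div_eq_mul_inv] using ((tendsto_one_div_add_atTop_nhds_zero_nat (𝕜 := ℝ)).const_mul
      (∑ i, K i)).add (tendsto_integral_logCutoff_mul hB)
  calc ∫⁻ x, .ofReal (A x) ∂μ
      ≤ liminf (fun n => ENNReal.ofReal (∫ x, logCutoff n x * A x ∂μ)) atTop :=
        lintegral_ofReal_le_liminf_logCutoff_mul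
          (fun n => ((hsum n).add (integrable_logCutoff_mul hB n)).congr (hA_eq n).symm) hA
    _ ≤ liminf (fun n : ℕ => ENNReal.ofReal
          ((∑ i, K i) / ((n : ℝ) + 1) + ∫ x, logCutoff n x * B x ∂μ)) atTop :=
        liminf_le_liminf (Eventually.of_forall fun n => ENNReal.ofReal_le_ofReal (hle n))
    _ = .ofReal (∫ x, B x ∂μ) := (ENNReal.tendsto_ofReal hlim).liminf_eq

end Divergence

section Calculus

variable {d : ℕ} {F : Type*} [NormedAddCommGroup F]

section NormedSpace

variable [NormedSpace ℝ F]

/-- The `i`-th partial derivative, for values in any real normed space; it unfolds to `pd` for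
complex values. -/
def partialDeriv (u : Ed d → F) (i : Fin d) (x : Ed d) : F :=
  fderiv ℝ u x (EuclideanSpace.single i 1)

/-- The length `|∇u|` of the gradient. -/
def gradNorm (u : Ed d → F) (x : Ed d) : ℝ :=
  √(∑ i, ‖partialDeriv u i x‖ ^ 2)

lemma gradNorm_nonneg (u : Ed d → F) (x : Ed d) : 0 ≤ gradNorm u x :=
  Real.sqrt_nonneg _

lemma gradNorm_sq (u : Ed d → F) (x : Ed d) :
    gradNorm u x ^ 2 = ∑ i, ‖partialDeriv u i x‖ ^ 2 :=
  Real.sq_sqrt (by positivity)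

lemma norm_partialDeriv_le_gradNorm (u : Ed d → F) (i : Fin d) (x : Ed d) :
    ‖partialDeriv u i x‖ ≤ gradNorm u x :=
  Real.le_sqrt_of_sq_le
    (Finset.single_le_sum (f := fun j => ‖partialDeriv u j x‖ ^ 2) (fun _ _ => by positivity)
      (Finset.mem_univ i))

lemma sum_coord_smul_partialDeriv (u : Ed d → F) (x : Ed d) :
    ∑ i, x i • partialDeriv u i x = fderiv ℝ u x x := by
  have hx : x = ∑ i, x i • EuclideanSpace.single i (1 : ℝ) := by
    ext k
    simp [Finset.sum_apply, Pi.single_apply]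
  conv_rhs => arg 2; rw [hx]
  simp [partialDeriv]

lemma sum_coord_sq (x : Ed d) : ∑ i, x i ^ 2 = ‖x‖ ^ 2 := by
  simp [EuclideanSpace.norm_sq_eq]

lemma norm_fderiv_self_le (u : Ed d → F) (x : Ed d) : ‖fderiv ℝ u x x‖ ≤ ‖x‖ * gradNorm u x := by
  calc ‖fderiv ℝ u x x‖ ≤ ∑ i, |x i| * ‖partialDeriv u i x‖ := by
        rw [← sum_coord_smul_partialDeriv]
        refine (norm_sum_le _ _).trans_eq ?_
        simp only [norm_smul, Real.norm_eq_abs]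
    _ ≤ √(∑ i, |x i| ^ 2) * √(∑ i, ‖partialDeriv u i x‖ ^ 2) :=
        Real.sum_mul_le_sqrt_mul_sqrt _ _ _
    _ = ‖x‖ * gradNorm u x := by
        simp only [sq_abs, sum_coord_sq, Real.sqrt_sq (norm_nonneg x), gradNorm]

lemma contDiff_partialDeriv {u : Ed d → F} (hu : ContDiff ℝ 2 u) (i : Fin d) :
    ContDiff ℝ 1 (partialDeriv u i) :=
  (hu.fderiv_right (m := 1) (by norm_num)).clm_apply contDiff_const

lemma contDiff_fderiv_self {u : Ed d → F} (hu : ContDiff ℝ 2 u) :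
    ContDiff ℝ 1 fun x => fderiv ℝ u x x :=
  (hu.fderiv_right (m := 1) (by norm_num)).clm_apply contDiff_id

lemma continuous_gradNorm {u : Ed d → F} (hu : ContDiff ℝ 2 u) : Continuous (gradNorm u) :=
  (continuous_finsetSum _ fun i _ =>
    ((contDiff_partialDeriv hu i).continuous.norm.pow 2)).sqrt

lemma partialDeriv_fderiv_self {u : Ed d → F} (hu : ContDiff ℝ 2 u) (i : Fin d) (x : Ed d) :
    partialDeriv (fun y => fderiv ℝ u y y) i x =
      partialDeriv u i x + fderiv ℝ (partialDeriv u i) x x := by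
  have hd : DifferentiableAt ℝ (fderiv ℝ u) x :=
    (hu.fderiv_right (m := 1) (by norm_num)).differentiable one_ne_zero x
  have hEuler : fderiv ℝ (fun y => fderiv ℝ u y y) x = _ :=
    (hd.hasFDerivAt.clm_apply (hasFDerivAt_id x)).fderiv
  have hpartial : fderiv ℝ (partialDeriv u i) x = _ :=
    (hd.hasFDerivAt.clm_apply (hasFDerivAt_const (EuclideanSpace.single i (1 : ℝ)) x)).fderiv
  have hsymm := hu.contDiffAt.isSymmSndFDerivAt (x := x) (by simp) x (EuclideanSpace.single i 1)
  rw [partialDeriv, hEuler, hpartial]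
  simp [partialDeriv, hsymm]

lemma sum_partialDeriv_mul_coord {g : Ed d → ℝ} {x : Ed d} (hg : DifferentiableAt ℝ g x) :
    ∑ i, partialDeriv (fun y => g y * y i) i x = d * g x + fderiv ℝ g x x := by
  have hi : ∀ i, partialDeriv (fun y => g y * y i) i x = g x + x i • partialDeriv g i x := by
    intro i
    have hcoord : HasFDerivAt (fun y : Ed d => y i) (EuclideanSpace.proj (𝕜 := ℝ) i) x :=
      (EuclideanSpace.proj (𝕜 := ℝ) i).hasFDerivAt
    rw [partialDeriv, (hg.hasFDerivAt.fun_mul hcoord).fderiv]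
    simp [partialDeriv]
  simp only [hi, Finset.sum_add_distrib, sum_coord_smul_partialDeriv, Finset.sum_const,
    Finset.card_univ, Fintype.card_fin, nsmul_eq_mul]

end NormedSpace

variable [InnerProductSpace ℝ F]

lemma contDiff_gradNorm_sq {u : Ed d → F} (hu : ContDiff ℝ 2 u) :
    ContDiff ℝ 1 fun x => gradNorm u x ^ 2 := by
  simp only [gradNorm_sq]
  exact ContDiff.sum fun i _ => (contDiff_partialDeriv hu i).norm_sq ℝ

lemma fderiv_gradNorm_sq {u : Ed d → F} (hu : ContDiff ℝ 2 u) (x v : Ed d) :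
    fderiv ℝ (fun y => gradNorm u y ^ 2) x v =
      2 * ∑ i, ⟪partialDeriv u i x, fderiv ℝ (partialDeriv u i) x v⟫_ℝ := by
  simp only [gradNorm_sq]
  have hderiv := HasFDerivAt.fun_sum (u := Finset.univ) fun i _ =>
    (((contDiff_partialDeriv hu i).differentiable one_ne_zero x).hasFDerivAt).norm_sq
  rw [hderiv.fderiv, Finset.mul_sum]
  simp

lemma sum_partialDeriv_mul_inner {u Z : Ed d → F} {k : Ed d → ℝ} {x : Ed d}
    (hu : ContDiff ℝ 2 u) (hZ : DifferentiableAt ℝ Z x) (hk : DifferentiableAt ℝ k x) :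
    ∑ i, partialDeriv (fun y => k y * ⟪partialDeriv u i y, Z y⟫_ℝ) i x =
      k x * (⟪∑ i, partialDeriv (partialDeriv u i) i x, Z x⟫_ℝ +
        ∑ i, ⟪partialDeriv u i x, partialDeriv Z i x⟫_ℝ) +
      ∑ i, partialDeriv k i x * ⟪partialDeriv u i x, Z x⟫_ℝ := by
  rw [sum_inner, ← Finset.sum_add_distrib, Finset.mul_sum, ← Finset.sum_add_distrib]
  refine Finset.sum_congr rfl fun i _ => ?_
  have hui := (contDiff_partialDeriv hu i).differentiable one_ne_zero x
  rw [partialDeriv, (hk.hasFDerivAt.fun_mul (hui.hasFDerivAt.inner ℝ hZ.hasFDerivAt)).fderiv]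
  simp only [partialDeriv, add_apply, smul_apply, ContinuousLinearMap.comp_apply,
    ContinuousLinearMap.prod_apply, fderivInnerCLM_apply, smul_eq_mul]
  ring

lemma sum_partialDeriv_inner {u Z : Ed d → F} {x : Ed d} (hu : ContDiff ℝ 2 u)
    (hZ : DifferentiableAt ℝ Z x) :
    ∑ i, partialDeriv (fun y => ⟪partialDeriv u i y, Z y⟫_ℝ) i x =
      ⟪∑ i, partialDeriv (partialDeriv u i) i x, Z x⟫_ℝ +
        ∑ i, ⟪partialDeriv u i x, partialDeriv Z i x⟫_ℝ := by
  have hone : DifferentiableAt ℝ (fun _ : Ed d => (1 : ℝ)) x := differentiableAt_const 1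
  have hconst : ∀ i, partialDeriv (fun _ : Ed d => (1 : ℝ)) i x = 0 := by simp [partialDeriv]
  simpa only [one_mul, hconst, zero_mul, Finset.sum_const_zero, add_zero] using
    sum_partialDeriv_mul_inner hu hZ hone

end Calculus

section MorawetzIdentity

variable {d : ℕ} {F : Type*} [NormedAddCommGroup F] [InnerProductSpace ℝ F]

/-- The Morawetz multiplier `x · ∇u + (d - 1) / 2 * u`. -/
def morawetzMultiplier (u : Ed d → F) (x : Ed d) : F :=
  fderiv ℝ u x x + (((d : ℝ) - 1) / 2) • u x

/-- The coefficient of `x` in the Morawetz flux for the equation `-Δu + W u = f`, with radial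
weights `k` and `h` related by `∇k = -h x`. -/
def morawetzDensity (k h W : Ed d → ℝ) (u : Ed d → F) (x : Ed d) : ℝ :=
  1 / 2 * k x * (gradNorm u x ^ 2 + W x * ‖u x‖ ^ 2) - ((d : ℝ) - 1) / 4 * h x * ‖u x‖ ^ 2

/-- The flux obtained by testing `-Δu + W u = f` against `k` times the Morawetz multiplier. -/
def morawetzFlux (k h W : Ed d → ℝ) (u : Ed d → F) (i : Fin d) (x : Ed d) : ℝ :=
  k x * ⟪partialDeriv u i x, morawetzMultiplier u x⟫_ℝ - morawetzDensity k h W u x * x i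

/-- The quadratic form in `u` and `∇u` that the divergence of the Morawetz flux contributes at a
point where the weights satisfy `∇k = -h x` and `∇h = -m x`. -/
def morawetzForm (k h m : ℝ) (W : Ed d → ℝ) (u : Ed d → F) (x : Ed d) : ℝ :=
  -h * ‖fderiv ℝ u x x‖ ^ 2
    + 1 / 2 * (k + h * ‖x‖ ^ 2) * gradNorm u x ^ 2
    - 1 / 2 * (k - h * ‖x‖ ^ 2) * W x * ‖u x‖ ^ 2
    - 1 / 2 * k * fderiv ℝ W x x * ‖u x‖ ^ 2
    + ((d : ℝ) - 1) / 4 * (d * h - m * ‖x‖ ^ 2) * ‖u x‖ ^ 2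

variable {k h W : Ed d → ℝ} {u : Ed d → F}

lemma contDiff_morawetzMultiplier (hu : ContDiff ℝ 2 u) : ContDiff ℝ 1 (morawetzMultiplier u) :=
  (contDiff_fderiv_self hu).add (contDiff_const.smul (hu.of_le one_le_two))

lemma partialDeriv_morawetzMultiplier (hu : ContDiff ℝ 2 u) (i : Fin d) (x : Ed d) :
    partialDeriv (morawetzMultiplier u) i x =
      (1 + ((d : ℝ) - 1) / 2) • partialDeriv u i x + fderiv ℝ (partialDeriv u i) x x := by
  have hEuler := (contDiff_fderiv_self hu).differentiable one_ne_zero x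
  have hu' := hu.differentiable two_ne_zero x
  have hadd : fderiv ℝ (morawetzMultiplier u) x = _ :=
    fderiv_fun_add hEuler (hu'.const_smul (((d : ℝ) - 1) / 2))
  have hderiv := partialDeriv_fderiv_self hu i x
  rw [partialDeriv] at hderiv
  rw [partialDeriv, hadd, add_apply, hderiv, fderiv_fun_const_smul hu', smul_apply, add_smul,
    one_smul]
  simp only [partialDeriv]
  abel

lemma contDiffOn_morawetzFlux {s : Set (Ed d)} (hu : ContDiff ℝ 2 u) (hk : ContDiffOn ℝ 1 k s)
    (hh : ContDiffOn ℝ 1 h s) (hW : ContDiffOn ℝ 1 W s) (i : Fin d) :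
    ContDiffOn ℝ 1 (morawetzFlux k h W u i) s := by
  have hmul := (contDiff_morawetzMultiplier hu).contDiffOn (s := s)
  have hpart := (contDiff_partialDeriv hu i).contDiffOn (s := s)
  have hgrad := (contDiff_gradNorm_sq hu).contDiffOn (s := s)
  have hu1 := ((hu.of_le one_le_two).norm_sq ℝ).contDiffOn (s := s)
  have hcoord : ContDiffOn ℝ 1 (fun x : Ed d => x i) s := by fun_prop
  unfold morawetzFlux morawetzDensity
  exact (hk.mul (hpart.inner ℝ hmul)).sub ((((contDiffOn_const.mul hk).mul
    (hgrad.add (hW.mul hu1))).sub ((contDiffOn_const.mul hh).mul hu1)).mul hcoord)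

variable {x : Ed d} {m : ℝ}

lemma fderiv_morawetzDensity (hu : ContDiff ℝ 2 u)
    (hk : HasFDerivAt k (-h x • innerSL ℝ x) x) (hh : HasFDerivAt h (-m • innerSL ℝ x) x)
    (hW : DifferentiableAt ℝ W x) :
    DifferentiableAt ℝ (morawetzDensity k h W u) x ∧
    fderiv ℝ (morawetzDensity k h W u) x x =
      -(1 / 2 * h x * ‖x‖ ^ 2 * (gradNorm u x ^ 2 + W x * ‖u x‖ ^ 2)) +
      1 / 2 * k x * (2 * ∑ i, ⟪partialDeriv u i x, fderiv ℝ (partialDeriv u i) x x⟫_ℝ +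
        fderiv ℝ W x x * ‖u x‖ ^ 2 + 2 * W x * ⟪u x, fderiv ℝ u x x⟫_ℝ) -
      ((d : ℝ) - 1) / 4 * (2 * h x * ⟪u x, fderiv ℝ u x x⟫_ℝ - m * ‖x‖ ^ 2 * ‖u x‖ ^ 2) := by
  have hu' := (hu.differentiable two_ne_zero x).hasFDerivAt.norm_sq
  have hgrad := ((contDiff_gradNorm_sq hu).differentiable one_ne_zero x).hasFDerivAt
  have hderiv : HasFDerivAt (morawetzDensity k h W u) _ x :=
    ((hk.const_mul (1 / 2)).mul (hgrad.add (hW.hasFDerivAt.mul hu'))).sub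
      ((hh.const_mul (((d : ℝ) - 1) / 4)).mul hu')
  refine ⟨hderiv.differentiableAt, ?_⟩
  rw [hderiv.fderiv]
  simp only [Pi.add_apply, Pi.mul_apply, neg_smul, smul_neg, sub_apply, add_apply, smul_apply,
    neg_apply, fderiv_gradNorm_sq hu, smul_eq_mul, nsmul_eq_mul, Nat.cast_ofNat,
    ContinuousLinearMap.comp_apply, innerSL_apply_apply, real_inner_self_eq_norm_sq]
  ring

theorem sum_partialDeriv_morawetzFlux (hu : ContDiff ℝ 2 u)
    (hk : HasFDerivAt k (-h x • innerSL ℝ x) x) (hh : HasFDerivAt h (-m • innerSL ℝ x) x)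
    (hW : DifferentiableAt ℝ W x) :
    ∑ i, partialDeriv (morawetzFlux k h W u i) i x =
      k x * ⟪∑ i, partialDeriv (partialDeriv u i) i x - W x • u x, morawetzMultiplier u x⟫_ℝ
        + morawetzForm (k x) (h x) m W u x := by
  have hmul : DifferentiableAt ℝ (morawetzMultiplier u) x :=
    (contDiff_morawetzMultiplier hu).differentiable one_ne_zero x
  obtain ⟨hdens, hdens_eq⟩ := fderiv_morawetzDensity hu hk hh hW
  have hsub : ∀ i, partialDeriv (morawetzFlux k h W u i) i x =
      partialDeriv (fun y => k y * ⟪partialDeriv u i y, morawetzMultiplier u y⟫_ℝ) i x -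
      partialDeriv (fun y => morawetzDensity k h W u y * y i) i x := by
    intro i
    have hui := (contDiff_partialDeriv hu i).differentiable one_ne_zero x
    have hcoord : DifferentiableAt ℝ (fun y : Ed d => y i) x := by fun_prop
    exact congrArg (· (EuclideanSpace.single i 1))
      (fderiv_sub (hk.differentiableAt.mul (hui.inner ℝ hmul)) (hdens.mul hcoord))
  have hgradk : ∑ i, partialDeriv k i x * ⟪partialDeriv u i x, morawetzMultiplier u x⟫_ℝ =
      -h x * ⟪fderiv ℝ u x x, morawetzMultiplier u x⟫_ℝ := by
    rw [← sum_coord_smul_partialDeriv, sum_inner, Finset.mul_sum]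
    refine Finset.sum_congr rfl fun i _ => ?_
    simp only [partialDeriv, hk.fderiv, smul_apply, innerSL_apply_apply, smul_eq_mul,
      EuclideanSpace.inner_single_right, Real.ringHom_apply, real_inner_smul_left]
    ring
  have hgradmul : ∑ i, ⟪partialDeriv u i x, partialDeriv (morawetzMultiplier u) i x⟫_ℝ =
      (1 + ((d : ℝ) - 1) / 2) * gradNorm u x ^ 2 +
        ∑ i, ⟪partialDeriv u i x, fderiv ℝ (partialDeriv u i) x x⟫_ℝ := by
    rw [gradNorm_sq, Finset.mul_sum, ← Finset.sum_add_distrib]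
    refine Finset.sum_congr rfl fun i _ => ?_
    rw [partialDeriv_morawetzMultiplier hu, inner_add_right, real_inner_smul_right,
      real_inner_self_eq_norm_sq]
  simp only [hsub, Finset.sum_sub_distrib, sum_partialDeriv_mul_coord hdens, hdens_eq,
    sum_partialDeriv_mul_inner hu hmul hk.differentiableAt, hgradk, hgradmul]
  simp only [morawetzForm, morawetzDensity, morawetzMultiplier, inner_add_right, inner_sub_left,
    real_inner_smul_left, real_inner_smul_right, real_inner_self_eq_norm_sq,
    real_inner_comm (u x) (fderiv ℝ u x x)]
  ring

end MorawetzIdentity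

section Weights

variable {E : Type*} [NormedAddCommGroup E]

/-- The regularised inverse norm `(R² + ‖x‖²) ^ (-1/2)`; it is `‖x‖⁻¹` for `R = 0`. -/
def smoothInvNorm (R : ℝ) (x : E) : ℝ :=
  (√(R ^ 2 + ‖x‖ ^ 2))⁻¹

/-- The radial weight `‖x‖⁻ⁿ + δ (R² + ‖x‖²) ^ (-n/2)`. The first term sees the potential, the
second one localises to the ball of radius `R`. -/
def morawetzWeight (δ R : ℝ) (n : ℕ) (x : E) : ℝ :=
  ‖x‖⁻¹ ^ n + δ * smoothInvNorm R x ^ n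

lemma smoothInvNorm_zero (x : E) : smoothInvNorm 0 x = ‖x‖⁻¹ := by
  simp [smoothInvNorm]

lemma morawetzWeight_eq (δ R : ℝ) (n : ℕ) : (morawetzWeight δ R n : E → ℝ) =
    fun x => smoothInvNorm 0 x ^ n + δ * smoothInvNorm R x ^ n := by
  funext x
  rw [smoothInvNorm_zero, morawetzWeight]

lemma smoothInvNorm_pos (R : ℝ) {x : E} (hx : x ≠ 0) : 0 < smoothInvNorm R x := by
  unfold smoothInvNorm
  positivity

lemma sq_add_norm_sq_mul_smoothInvNorm_sq (R : ℝ) {x : E} (hx : x ≠ 0) :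
    (R ^ 2 + ‖x‖ ^ 2) * smoothInvNorm R x ^ 2 = 1 := by
  have hpos : 0 < R ^ 2 + ‖x‖ ^ 2 := by positivity
  rw [smoothInvNorm, inv_pow, Real.sq_sqrt hpos.le, mul_inv_cancel₀ hpos.ne']

lemma smoothInvNorm_le_inv_norm (R : ℝ) {x : E} (hx : x ≠ 0) : smoothInvNorm R x ≤ ‖x‖⁻¹ :=
  inv_anti₀ (norm_pos_iff.2 hx) (Real.le_sqrt_of_sq_le (le_add_of_nonneg_left (sq_nonneg R)))

lemma one_le_mul_smoothInvNorm_pow_three {R : ℝ} {x : E} (hx : x ≠ 0) (hxR : ‖x‖ < R) :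
    1 ≤ 3 * R * (R ^ 2 * smoothInvNorm R x ^ 3) := by
  have hq := smoothInvNorm_pos R hx
  have hR : 0 < R := (norm_nonneg x).trans_lt hxR
  have hident := sq_add_norm_sq_mul_smoothInvNorm_sq R hx
  set q := smoothInvNorm R x
  have hRq : 1 / 2 ≤ (R * q) ^ 2 := by
    have : ‖x‖ ^ 2 * q ^ 2 ≤ R ^ 2 * q ^ 2 := by gcongr
    linarith
  have hRq' : 2 / 3 ≤ R * q := by
    by_contra! hlt
    nlinarith [mul_pos hR hq]
  calc (1 : ℝ) ≤ 3 * (2 / 3 * (1 / 2)) := by norm_num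
    _ ≤ 3 * (R * q * (R * q) ^ 2) := by gcongr
    _ = 3 * R * (R ^ 2 * q ^ 3) := by ring

lemma morawetzWeight_nonneg {δ : ℝ} (hδ : 0 ≤ δ) (R : ℝ) (n : ℕ) (x : E) :
    0 ≤ morawetzWeight δ R n x := by
  unfold morawetzWeight smoothInvNorm
  positivity

lemma morawetzWeight_mul_norm_pow_le_two {δ : ℝ} (hδ1 : δ ≤ 1) (R : ℝ) (n : ℕ) {x : E}
    (hx : x ≠ 0) : morawetzWeight δ R n x * ‖x‖ ^ n ≤ 2 := by
  have hq := smoothInvNorm_pos R hx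
  calc morawetzWeight δ R n x * ‖x‖ ^ n
      ≤ (‖x‖⁻¹ ^ n + 1 * ‖x‖⁻¹ ^ n) * ‖x‖ ^ n := by
        unfold morawetzWeight
        gcongr
        exact smoothInvNorm_le_inv_norm R hx
    _ = 2 * (‖x‖⁻¹ * ‖x‖) ^ n := by ring
    _ = 2 := by rw [inv_mul_cancel₀ (norm_ne_zero_iff.2 hx), one_pow, mul_one]

variable [InnerProductSpace ℝ E]

lemma hasFDerivAt_smoothInvNorm_pow (R : ℝ) (n : ℕ) {x : E} (hx : x ≠ 0) :
    HasFDerivAt (fun y => smoothInvNorm R y ^ n)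
      (-(n * smoothInvNorm R x ^ (n + 2)) • innerSL ℝ x) x := by
  have hpos : 0 < R ^ 2 + ‖x‖ ^ 2 := by positivity
  have hinner : HasFDerivAt (fun y : E => R ^ 2 + ‖y‖ ^ 2) _ x :=
    (hasStrictFDerivAt_norm_sq x).hasFDerivAt.const_add (R ^ 2)
  have houter : HasDerivAt (fun t : ℝ => (√t)⁻¹ ^ n) _ (R ^ 2 + ‖x‖ ^ 2) :=
    ((Real.hasDerivAt_sqrt hpos.ne').fun_inv (Real.sqrt_pos.2 hpos).ne').fun_pow n
  refine (houter.comp_hasFDerivAt x hinner).congr_fderiv ?_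
  ext v
  have hs : √(R ^ 2 + ‖x‖ ^ 2) ≠ 0 := (Real.sqrt_pos.2 hpos).ne'
  simp only [smul_apply, smul_eq_mul, innerSL_apply_apply, nsmul_eq_mul, smoothInvNorm]
  rcases n with _ | n
  · simp
  · simp only [Nat.add_sub_cancel, inv_pow]
    push_cast
    field_simp
    ring

lemma hasFDerivAt_morawetzWeight (δ R : ℝ) (n : ℕ) {x : E} (hx : x ≠ 0) :
    HasFDerivAt (morawetzWeight δ R n) (-(n * morawetzWeight δ R (n + 2) x) • innerSL ℝ x) x := by
  simp only [morawetzWeight_eq]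
  refine ((hasFDerivAt_smoothInvNorm_pow 0 n hx).add
    ((hasFDerivAt_smoothInvNorm_pow R n hx).const_mul δ)).congr_fderiv ?_
  module

lemma contDiffOn_morawetzWeight (δ R : ℝ) (n : ℕ) :
    ContDiffOn ℝ 1 (morawetzWeight δ R n : E → ℝ) {0}ᶜ := by
  have hsmooth : ∀ ρ : ℝ, ContDiffOn ℝ 1 (smoothInvNorm ρ : E → ℝ) {0}ᶜ := fun ρ x hx => by
    have hpos : 0 < ρ ^ 2 + ‖x‖ ^ 2 := by have : x ≠ 0 := hx; positivity
    exact (((contDiffAt_const.add (contDiff_norm_sq ℝ).contDiffAt).sqrt hpos.ne').inv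
      (Real.sqrt_pos.2 hpos).ne').contDiffWithinAt
  rw [morawetzWeight_eq]
  exact ((hsmooth 0).pow n).add (contDiffOn_const.mul ((hsmooth R).pow n))

end Weights

section Positivity

variable {d : ℕ} {F : Type*} [NormedAddCommGroup F] [InnerProductSpace ℝ F]

/-- The repulsivity condition `γ V + |x| ∂ᵣV ≤ (1 - η) (d - 1) (d - 3) / (2 |x|²)`. -/
def IsRepulsive (γ η : ℝ) (V : Ed d → ℝ) : Prop :=
  ∀ x : Ed d, x ≠ 0 →
    γ * V x + ‖x‖ * radialDeriv V x ≤ (1 - η) * ((d : ℝ) - 1) * ((d : ℝ) - 3) / (2 * ‖x‖ ^ 2)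

lemma IsRepulsive.fderiv_self_le {γ η : ℝ} {V : Ed d → ℝ} (hV : IsRepulsive γ η V) {x : Ed d}
    (hx : x ≠ 0) :
    fderiv ℝ V x x ≤ (1 - η) * (((d : ℝ) - 1) * (d - 3) / 2) * ‖x‖⁻¹ ^ 2 - γ * V x := by
  have hxpos : 0 < ‖x‖ := norm_pos_iff.2 hx
  have hrep := hV x hx
  rw [radialDeriv, mul_div_cancel₀ _ hxpos.ne'] at hrep
  calc fderiv ℝ V x x
      ≤ (1 - η) * ((d : ℝ) - 1) * ((d : ℝ) - 3) / (2 * ‖x‖ ^ 2) - γ * V x := by linarith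
    _ = _ := by field_simp

lemma le_morawetzForm_smoothInvNorm (R : ℝ) (W : Ed d → ℝ) (u : Ed d → F) {x : Ed d}
    (hx : x ≠ 0) :
    1 / 2 * (R ^ 2 * smoothInvNorm R x ^ 3) * (gradNorm u x ^ 2 - W x * ‖u x‖ ^ 2)
        - 1 / 2 * smoothInvNorm R x * fderiv ℝ W x x * ‖u x‖ ^ 2
        + ((d : ℝ) - 1) * (d - 3) / 4 * smoothInvNorm R x ^ 3 * ‖u x‖ ^ 2 ≤
      morawetzForm (smoothInvNorm R x) (smoothInvNorm R x ^ 3) (3 * smoothInvNorm R x ^ 5)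
        W u x := by
  have hd : (1 : ℝ) ≤ d := by
    have : d ≠ 0 := by rintro rfl; exact hx (Subsingleton.elim _ _)
    exact_mod_cast Nat.one_le_iff_ne_zero.2 this
  have hq := smoothInvNorm_pos R hx
  have hident := sq_add_norm_sq_mul_smoothInvNorm_sq R hx
  set q := smoothInvNorm R x
  have hq3 : q ^ 3 * ‖x‖ ^ 2 = q - R ^ 2 * q ^ 3 := by linear_combination q * hident
  have hq5 : q ^ 5 * ‖x‖ ^ 2 = q ^ 3 - R ^ 2 * q ^ 5 := by linear_combination q ^ 3 * hident
  have hEuler : q ^ 3 * ‖fderiv ℝ u x x‖ ^ 2 ≤ (q - R ^ 2 * q ^ 3) * gradNorm u x ^ 2 := by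
    calc q ^ 3 * ‖fderiv ℝ u x x‖ ^ 2 ≤ q ^ 3 * (‖x‖ * gradNorm u x) ^ 2 := by
          gcongr
          exact norm_fderiv_self_le u x
      _ = (q - R ^ 2 * q ^ 3) * gradNorm u x ^ 2 := by rw [← hq3]; ring
  have hdrop : 0 ≤ ((d : ℝ) - 1) * (R ^ 2 * q ^ 5) * ‖u x‖ ^ 2 := by
    have : (0 : ℝ) ≤ d - 1 := by linarith
    positivity
  rw [morawetzForm, hq3, mul_assoc 3, hq5]
  linarith

variable {γ η δ τ : ℝ} {V : Ed d → ℝ}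

lemma IsRepulsive.le_morawetzForm_inv_norm (hV : IsRepulsive γ η V) (u : Ed d → F) {x : Ed d}
    (hx : x ≠ 0) :
    γ / 2 * (V x * ‖u x‖ ^ 2 * ‖x‖⁻¹) +
        η * (((d : ℝ) - 1) * (d - 3) / 4) * (‖u x‖ ^ 2 * ‖x‖⁻¹ ^ 3) ≤
      morawetzForm ‖x‖⁻¹ (‖x‖⁻¹ ^ 3) (3 * ‖x‖⁻¹ ^ 5) (fun y => V y - τ) u x := by
  have hform := le_morawetzForm_smoothInvNorm 0 (fun y => V y - τ) u hx
  have hEV := mul_le_mul_of_nonneg_left (hV.fderiv_self_le hx)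
    (by positivity : 0 ≤ 1 / 2 * (‖x‖⁻¹ * ‖u x‖ ^ 2))
  simp only [smoothInvNorm_zero, fderiv_sub_const] at hform
  linarith

lemma IsRepulsive.le_morawetzForm_smoothInvNorm (hV : IsRepulsive γ η V) (hd : 3 ≤ d)
    (hγ : 0 ≤ γ) (hη : 0 ≤ η) (R : ℝ) (u : Ed d → F) {x : Ed d} (hx : x ≠ 0) (hVx : 0 ≤ V x) :
    1 / 2 * (R ^ 2 * smoothInvNorm R x ^ 3) * (gradNorm u x ^ 2 + τ * ‖u x‖ ^ 2)
        - 1 / 2 * (V x * ‖u x‖ ^ 2 * ‖x‖⁻¹)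
        - ((d : ℝ) - 1) * (d - 3) / 4 * (‖u x‖ ^ 2 * ‖x‖⁻¹ ^ 3) ≤
      morawetzForm (smoothInvNorm R x) (smoothInvNorm R x ^ 3) (3 * smoothInvNorm R x ^ 5)
        (fun y => V y - τ) u x := by
  have hform := _root_.le_morawetzForm_smoothInvNorm R (fun y => V y - τ) u hx
  have hq := smoothInvNorm_pos R hx
  have hqp := smoothInvNorm_le_inv_norm R hx
  have hident := sq_add_norm_sq_mul_smoothInvNorm_sq R hx
  have hEV := hV.fderiv_self_le hx
  simp only [fderiv_sub_const] at hform
  set p := ‖x‖⁻¹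
  set q := smoothInvNorm R x
  set N : ℝ := ((d : ℝ) - 1) * (d - 3)
  have hN : 0 ≤ N := by
    have : (3 : ℝ) ≤ d := by exact_mod_cast hd
    exact mul_nonneg (by linarith) (by linarith)
  have hRq : R ^ 2 * q ^ 3 ≤ p := by
    calc R ^ 2 * q ^ 3 = R ^ 2 * q ^ 2 * q := by ring
      _ ≤ 1 * q := by gcongr; nlinarith [sq_nonneg (‖x‖ * q)]
      _ ≤ p := by linarith
  have hpotential : R ^ 2 * q ^ 3 * (V x * ‖u x‖ ^ 2) ≤ p * (V x * ‖u x‖ ^ 2) := by gcongr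
  have hEuler : q * fderiv ℝ V x x * ‖u x‖ ^ 2 ≤ N / 2 * (‖u x‖ ^ 2 * p ^ 3) := by
    calc q * fderiv ℝ V x x * ‖u x‖ ^ 2 ≤ q * (N / 2 * p ^ 2) * ‖u x‖ ^ 2 := by
          gcongr
          nlinarith [mul_nonneg hγ hVx, mul_nonneg hη (by positivity : 0 ≤ N / 2 * p ^ 2)]
      _ ≤ p * (N / 2 * p ^ 2) * ‖u x‖ ^ 2 := by gcongr
      _ = N / 2 * (‖u x‖ ^ 2 * p ^ 3) := by ring
  have hdrop : 0 ≤ N / 4 * q ^ 3 * ‖u x‖ ^ 2 := by positivity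
  linarith

/-- For small `δ`, half of the gain of the weight `‖x‖⁻¹` from repulsivity absorbs the terms of
the wrong sign produced by `δ (R² + ‖x‖²) ^ (-1/2)`. -/
theorem IsRepulsive.le_morawetzForm_morawetzWeight (hV : IsRepulsive γ η V) (hd : 3 ≤ d)
    (hδ : 0 ≤ δ) (hδγ : δ ≤ γ / 2) (hδη : δ ≤ η / 2) (R : ℝ) (u : Ed d → F) {x : Ed d}
    (hx : x ≠ 0) (hVx : 0 ≤ V x) :
    δ / 2 * (R ^ 2 * smoothInvNorm R x ^ 3) * (gradNorm u x ^ 2 + τ * ‖u x‖ ^ 2)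
        + γ / 4 * (V x * ‖u x‖ ^ 2 * ‖x‖⁻¹)
        + η * (((d : ℝ) - 1) * (d - 3) / 8) * (‖u x‖ ^ 2 * ‖x‖⁻¹ ^ 3) ≤
      morawetzForm (morawetzWeight δ R 1 x) (morawetzWeight δ R 3 x) (3 * morawetzWeight δ R 5 x)
        (fun y => V y - τ) u x := by
  have hsplit : morawetzForm (morawetzWeight δ R 1 x) (morawetzWeight δ R 3 x)
      (3 * morawetzWeight δ R 5 x) (fun y => V y - τ) u x =
      morawetzForm ‖x‖⁻¹ (‖x‖⁻¹ ^ 3) (3 * ‖x‖⁻¹ ^ 5) (fun y => V y - τ) u x +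
      δ * morawetzForm (smoothInvNorm R x) (smoothInvNorm R x ^ 3) (3 * smoothInvNorm R x ^ 5)
        (fun y => V y - τ) u x := by
    simp only [morawetzForm, morawetzWeight]
    ring
  have hgain := hV.le_morawetzForm_inv_norm (τ := τ) u hx
  have hloss := mul_le_mul_of_nonneg_left (hV.le_morawetzForm_smoothInvNorm (τ := τ) hd
    (by linarith) (by linarith) R u hx hVx) hδ
  have hpotential := mul_le_mul_of_nonneg_right hδγ
    (by positivity : 0 ≤ V x * ‖u x‖ ^ 2 * ‖x‖⁻¹)
  have hhardy : δ * (((d : ℝ) - 1) * (d - 3) * (‖u x‖ ^ 2 * ‖x‖⁻¹ ^ 3)) ≤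
      η / 2 * (((d : ℝ) - 1) * (d - 3) * (‖u x‖ ^ 2 * ‖x‖⁻¹ ^ 3)) := by
    have hd' : (3 : ℝ) ≤ d := by exact_mod_cast hd
    have hN : 0 ≤ ((d : ℝ) - 1) * (d - 3) := mul_nonneg (by linarith) (by linarith)
    gcongr
  rw [hsplit]
  linarith

end Positivity

section FluxBound

variable {d : ℕ} {F : Type*} [NormedAddCommGroup F] [InnerProductSpace ℝ F]

lemma norm_morawetzMultiplier_le (hd : 0 < d) (u : Ed d → F) (x : Ed d) :
    ‖morawetzMultiplier u x‖ ≤ ‖x‖ * gradNorm u x + ((d : ℝ) - 1) / 2 * ‖u x‖ := by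
  have hd' : (1 : ℝ) ≤ d := by exact_mod_cast hd
  refine (norm_add_le _ _).trans (add_le_add (norm_fderiv_self_le u x) ?_)
  rw [norm_smul, Real.norm_of_nonneg (by linarith)]

lemma abs_morawetzDensity_le (hd : 0 < d) {k h W : Ed d → ℝ} {x : Ed d} (hx : x ≠ 0)
    (hk : |k x| * ‖x‖ ≤ 2) (hh : |h x| * ‖x‖ ^ 3 ≤ 2) (u : Ed d → F) :
    |morawetzDensity k h W u x| ≤ gradNorm u x ^ 2 / ‖x‖ + |W x| * ‖u x‖ ^ 2 / ‖x‖ +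
      ((d : ℝ) - 1) / 2 * (‖u x‖ ^ 2 / ‖x‖ ^ 3) := by
  have hr : 0 < ‖x‖ := norm_pos_iff.2 hx
  have hc : (0 : ℝ) ≤ ((d : ℝ) - 1) / 4 := by
    have : (1 : ℝ) ≤ d := by exact_mod_cast hd
    linarith
  have hWu : |gradNorm u x ^ 2 + W x * ‖u x‖ ^ 2| ≤ gradNorm u x ^ 2 + |W x| * ‖u x‖ ^ 2 :=
    (abs_add_le _ _).trans_eq (by rw [abs_mul, abs_sq, abs_sq])
  calc |morawetzDensity k h W u x|
      ≤ 1 / 2 * |k x| * |gradNorm u x ^ 2 + W x * ‖u x‖ ^ 2|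
          + ((d : ℝ) - 1) / 4 * |h x| * ‖u x‖ ^ 2 := by
        refine (abs_sub _ _).trans_eq ?_
        simp only [abs_mul, abs_sq, abs_of_pos (one_half_pos (α := ℝ)), abs_of_nonneg hc]
    _ ≤ 1 / 2 * (2 / ‖x‖) * (gradNorm u x ^ 2 + |W x| * ‖u x‖ ^ 2)
          + ((d : ℝ) - 1) / 4 * (2 / ‖x‖ ^ 3) * ‖u x‖ ^ 2 := by
        gcongr
        exacts [(le_div_iff₀ hr).2 hk, (le_div_iff₀ (by positivity)).2 hh]
    _ = _ := by ring

lemma abs_mul_inner_morawetzMultiplier_le {k : Ed d → ℝ} {x : Ed d} (hx : x ≠ 0)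
    (hk : |k x| * ‖x‖ ≤ 2) (u : Ed d → F) (i : Fin d) :
    |k x * ⟪partialDeriv u i x, morawetzMultiplier u x⟫_ℝ| ≤
      (2 * (gradNorm u x ^ 2 / ‖x‖) +
        ((d : ℝ) - 1) / 2 * (gradNorm u x ^ 2 / ‖x‖ + ‖u x‖ ^ 2 / ‖x‖ ^ 3)) * ‖x‖ := by
  have hr : 0 < ‖x‖ := norm_pos_iff.2 hx
  have hG := gradNorm_nonneg u x
  have hc : (0 : ℝ) ≤ ((d : ℝ) - 1) / 2 := by
    have : (1 : ℝ) ≤ d := by exact_mod_cast i.pos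
    linarith
  have hcross : 2 * (gradNorm u x * ‖u x‖ / ‖x‖ ^ 2) ≤
      gradNorm u x ^ 2 / ‖x‖ + ‖u x‖ ^ 2 / ‖x‖ ^ 3 := by
    have hsq : 0 ≤ (gradNorm u x - ‖u x‖ / ‖x‖) ^ 2 / ‖x‖ := by positivity
    have hexpand : (gradNorm u x - ‖u x‖ / ‖x‖) ^ 2 / ‖x‖ = gradNorm u x ^ 2 / ‖x‖
        + ‖u x‖ ^ 2 / ‖x‖ ^ 3 - 2 * (gradNorm u x * ‖u x‖ / ‖x‖ ^ 2) := by
      field_simp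
      ring
    linarith
  calc |k x * ⟪partialDeriv u i x, morawetzMultiplier u x⟫_ℝ|
      ≤ 2 / ‖x‖ * (gradNorm u x * (‖x‖ * gradNorm u x + ((d : ℝ) - 1) / 2 * ‖u x‖)) := by
        rw [abs_mul]
        refine mul_le_mul ((le_div_iff₀ hr).2 hk) ((abs_real_inner_le_norm _ _).trans ?_)
          (abs_nonneg _) (by positivity)
        exact mul_le_mul (norm_partialDeriv_le_gradNorm u i x)
          (norm_morawetzMultiplier_le i.pos u x) (norm_nonneg _) hG
    _ = (2 * (gradNorm u x ^ 2 / ‖x‖) +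
          ((d : ℝ) - 1) / 2 * (2 * (gradNorm u x * ‖u x‖ / ‖x‖ ^ 2))) * ‖x‖ := by field_simp
    _ ≤ _ := by gcongr

lemma abs_morawetzFlux_div_norm_le {k h W : Ed d → ℝ} {x : Ed d} (hx : x ≠ 0)
    (hk : |k x| * ‖x‖ ≤ 2) (hh : |h x| * ‖x‖ ^ 3 ≤ 2) (u : Ed d → F) (i : Fin d) :
    |morawetzFlux k h W u i x / ‖x‖| ≤
      (3 + ((d : ℝ) - 1) / 2) * (gradNorm u x ^ 2 / ‖x‖) + |W x| * ‖u x‖ ^ 2 / ‖x‖ +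
        ((d : ℝ) - 1) * (‖u x‖ ^ 2 / ‖x‖ ^ 3) := by
  have hr : 0 < ‖x‖ := norm_pos_iff.2 hx
  have htest := abs_mul_inner_morawetzMultiplier_le hx hk u i
  have hdensity := mul_le_mul (abs_morawetzDensity_le (W := W) i.pos hx hk hh u)
    (PiLp.norm_apply_le x i) (norm_nonneg _) ((abs_nonneg _).trans
      (abs_morawetzDensity_le i.pos hx hk hh u))
  rw [Real.norm_eq_abs, ← abs_mul] at hdensity
  rw [abs_div, abs_of_pos hr, div_le_iff₀ hr]
  refine (abs_sub _ _).trans ((add_le_add htest hdensity).trans_eq ?_)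
  ring

end FluxBound

section Integrability

lemma ofReal_integral_le_lintegral_enorm {α : Type*} [MeasurableSpace α] {μ : Measure α}
    (g : α → ℝ) : ENNReal.ofReal (∫ x, g x ∂μ) ≤ ∫⁻ x, ‖g x‖ₑ ∂μ :=
  (Real.ofReal_le_enorm _).trans (enorm_integral_le_lintegral_enorm g)

lemma integrable_inner_of_memLp_two {α F : Type*} [MeasurableSpace α] {μ : Measure α}
    [NormedAddCommGroup F] [InnerProductSpace ℝ F] {f g : α → F} (hf : MemLp f 2 μ)
    (hg : MemLp g 2 μ) : Integrable (fun x => ⟪f x, g x⟫_ℝ) μ :=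
  (hf.norm.integrable_mul hg.norm).mono (hf.1.inner hg.1) <| ae_of_all _ fun x => by
    simpa using abs_real_inner_le_norm (f x) (g x)

variable {E : Type*} [NormedAddCommGroup E] [MeasurableSpace E] [BorelSpace E] {μ : Measure E}

lemma aestronglyMeasurable_of_continuousOn_compl_singleton [NullSingletonClass μ] {F : Type*}
    [TopologicalSpace F] [TopologicalSpace.PseudoMetrizableSpace F]
    [SecondCountableTopologyEither E F] {g : E → F} {a : E} (hg : ContinuousOn g {a}ᶜ) :
    AEStronglyMeasurable g μ := by
  rw [← restrict_compl_singleton (μ := μ) a]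
  exact hg.aestronglyMeasurable (measurableSet_singleton a).compl

lemma integrable_div_norm_pow_of_integrableOn_ball {n : ℕ} {g : E → ℝ}
    (hball : IntegrableOn (fun x => g x / ‖x‖ ^ n) (ball 0 1) μ) (hg : Integrable g μ) :
    Integrable (fun x => g x / ‖x‖ ^ n) μ := by
  have hcompl : IntegrableOn (fun x => g x / ‖x‖ ^ n) (ball 0 1)ᶜ μ := by
    refine hg.norm.integrableOn.mono'
      (hg.aemeasurable.div (by fun_prop)).aestronglyMeasurable.restrict ?_
    refine ae_restrict_of_forall_mem measurableSet_ball.compl fun x hx => ?_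
    have hx1 : 1 ≤ ‖x‖ := by simpa using hx
    rw [norm_div, norm_pow, norm_norm]
    exact div_le_self (norm_nonneg _) (one_le_pow₀ hx1)
  simpa using hball.union hcompl

variable [NormedSpace ℝ E] [FiniteDimensional ℝ E] [μ.IsAddHaarMeasure]

lemma integrableOn_ball_div_norm_pow {n : ℕ} (hn : n < Module.finrank ℝ E) {g : E → ℝ}
    (hg : Continuous g) (r : ℝ) : IntegrableOn (fun x => g x / ‖x‖ ^ n) (ball 0 r) μ := by
  obtain ⟨C, hC⟩ := (isCompact_closedBall (0 : E) r).exists_bound_of_continuousOn hg.continuousOn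
  refine integrableOn_ball_of_norm_le_rpow (C := C) (α := n) (Nat.one_le_of_lt hn)
    (mod_cast hn) (ae_restrict_of_forall_mem measurableSet_ball fun x hx => ?_)
    (hg.measurable.div (by fun_prop)).aestronglyMeasurable
  rw [norm_div, norm_pow, norm_norm, Real.rpow_neg (norm_nonneg x), Real.rpow_natCast,
    ← div_eq_mul_inv]
  gcongr
  exact hC x (ball_subset_closedBall hx)

lemma integrable_div_norm_pow {n : ℕ} (hn : n < Module.finrank ℝ E) {g : E → ℝ}
    (hg : Continuous g) (hgint : Integrable g μ) : Integrable (fun x => g x / ‖x‖ ^ n) μ :=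
  integrable_div_norm_pow_of_integrableOn_ball (integrableOn_ball_div_norm_pow hn hg 1) hgint

end Integrability

section ResolventEquation

variable {d : ℕ}

/-- `u` is a classical `H¹` solution of `-Δu + V u + i e u - τ u = f` with `f ∈ L²` and a
nonnegative potential which is `C¹` away from the origin, where it may be singular. -/
structure IsResolventSolution (V : Ed d → ℝ) (e τ : ℝ) (u f : Ed d → ℂ) : Prop where
  potential_nonneg : ∀ x, 0 ≤ V x
  contDiffOn_potential : ContDiffOn ℝ 1 V {0}ᶜ
  contDiff : ContDiff ℝ 2 u
  memLp : MemLp u 2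
  memLp_gradNorm : MemLp (gradNorm u) 2
  memLp_source : MemLp f 2
  lap_eq : ∀ x, lap u x = (V x - τ) • u x + e • (Complex.I * u x) - f x

lemma sum_partialDeriv_partialDeriv (u : Ed d → ℂ) (x : Ed d) :
    ∑ i, partialDeriv (partialDeriv u i) i x = lap u x :=
  rfl

lemma continuous_lap {u : Ed d → ℂ} (hu : ContDiff ℝ 2 u) : Continuous (lap u) :=
  continuous_finsetSum _ fun i _ =>
    ((contDiff_partialDeriv hu i).continuous_fderiv one_ne_zero).clm_apply continuous_const

lemma real_inner_self_I_mul (z : ℂ) : ⟪z, Complex.I * z⟫_ℝ = 0 := by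
  simp only [Complex.inner, Complex.mul_re, Complex.mul_im, Complex.conj_re, Complex.conj_im,
    Complex.I_re, Complex.I_im]
  ring

namespace IsResolventSolution

variable {V : Ed d → ℝ} {e τ : ℝ} {u f : Ed d → ℂ}

lemma continuousOn_source (hs : IsResolventSolution V e τ u f) : ContinuousOn f {0}ᶜ := by
  have hf : f = fun x => (V x - τ) • u x + e • (Complex.I * u x) - lap u x := by
    funext x
    rw [hs.lap_eq x]
    ring
  have hV := hs.contDiffOn_potential.continuousOn
  have hu := hs.contDiff.continuous.continuousOn (s := {0}ᶜ)
  have hlap := (continuous_lap hs.contDiff).continuousOn (s := {0}ᶜ)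
  rw [hf]
  fun_prop

lemma memLp_partialDeriv (hs : IsResolventSolution V e τ u f) (i : Fin d) :
    MemLp (partialDeriv u i) 2 :=
  hs.memLp_gradNorm.mono (contDiff_partialDeriv hs.contDiff i).continuous.aestronglyMeasurable <|
    ae_of_all _ fun x => (norm_partialDeriv_le_gradNorm u i x).trans (le_abs_self _)

lemma integrable_inner_partialDeriv_div_norm (hs : IsResolventSolution V e τ u f) (hd : 1 < d)
    {Z : Ed d → ℂ} (hZ : Continuous Z) (hZ2 : MemLp Z 2) (i : Fin d) :
    Integrable fun x => ⟪partialDeriv u i x, Z x⟫_ℝ / ‖x‖ := by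
  simpa using integrable_div_norm_pow (n := 1) (by simpa using hd)
    ((contDiff_partialDeriv hs.contDiff i).continuous.inner hZ)
    (integrable_inner_of_memLp_two (hs.memLp_partialDeriv i) hZ2)

lemma inner_lap_self (hs : IsResolventSolution V e τ u f) (x : Ed d) :
    ⟪lap u x, u x⟫_ℝ = (V x - τ) * ‖u x‖ ^ 2 - ⟪f x, u x⟫_ℝ := by
  rw [hs.lap_eq, inner_sub_left, inner_add_left, real_inner_smul_left, real_inner_smul_left,
    real_inner_comm (u x) (Complex.I * u x), real_inner_self_I_mul, real_inner_self_eq_norm_sq,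
    mul_zero, add_zero]

lemma energy_le (hs : IsResolventSolution V e τ u f) (hd : 1 < d) :
    ∫⁻ x, .ofReal (gradNorm u x ^ 2 + V x * ‖u x‖ ^ 2) ≤
      .ofReal (∫ x, τ * ‖u x‖ ^ 2 + ⟪f x, u x⟫_ℝ) := by
  have := Fin.pos_iff_nonempty.1 (one_pos.trans hd)
  have hu := hs.contDiff
  refine lintegral_ofReal_le_of_sum_fderiv_eq_sub (v := fun i => EuclideanSpace.single i 1)
    (P := fun i x => ⟪partialDeriv u i x, u x⟫_ℝ)
    (fun i => ((contDiff_partialDeriv hu i).inner ℝ (hu.of_le (by norm_num))).contDiffOn)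
    (hs.integrable_inner_partialDeriv_div_norm hd hu.continuous hs.memLp)
    (fun x _ => ?_) ?_ fun x _ => ?_
  · have := hs.potential_nonneg x
    positivity
  · exact (hs.memLp.integrable_norm_pow two_ne_zero).const_mul τ |>.add
      (integrable_inner_of_memLp_two hs.memLp_source hs.memLp)
  · refine (sum_partialDeriv_inner hu (hu.differentiable two_ne_zero x)).trans ?_
    simp only [real_inner_self_eq_norm_sq, ← gradNorm_sq, sum_partialDeriv_partialDeriv]
    linarith [hs.inner_lap_self x]

lemma charge_le (hs : IsResolventSolution V e τ u f) (hd : 1 < d) :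
    ∫⁻ x, .ofReal (e ^ 2 * ‖u x‖ ^ 2) ≤ .ofReal (∫ x, ⟪f x, e • (Complex.I * u x)⟫_ℝ) := by
  have := Fin.pos_iff_nonempty.1 (one_pos.trans hd)
  have hu := hs.contDiff
  have hZ : ContDiff ℝ 2 fun x => e • (Complex.I * u x) := (contDiff_const.mul hu).const_smul e
  have hZ2 : MemLp (fun x => e • (Complex.I * u x)) 2 := (hs.memLp.const_mul Complex.I).const_smul e
  refine lintegral_ofReal_le_of_sum_fderiv_eq_sub (v := fun i => EuclideanSpace.single i 1)
    (P := fun i x => ⟪partialDeriv u i x, e • (Complex.I * u x)⟫_ℝ)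
    (fun i => ((contDiff_partialDeriv hu i).inner ℝ (hZ.of_le (by norm_num))).contDiffOn)
    (hs.integrable_inner_partialDeriv_div_norm hd hZ.continuous hZ2)
    (fun x _ => by positivity) (integrable_inner_of_memLp_two hs.memLp_source hZ2) fun x _ => ?_
  refine (sum_partialDeriv_inner hu (hZ.differentiable two_ne_zero x)).trans ?_
  have hdu := hu.differentiable two_ne_zero x
  have hpartial : ∀ i, ⟪partialDeriv u i x,
      partialDeriv (fun y => e • (Complex.I * u y)) i x⟫_ℝ = 0 := by
    intro i
    have hZd : HasFDerivAt (fun y => e • (Complex.I * u y)) _ x :=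
      (hdu.hasFDerivAt.const_mul Complex.I).fun_const_smul e
    rw [partialDeriv, partialDeriv, hZd.fderiv]
    exact (real_inner_smul_right _ _ _).trans
      (mul_eq_zero_of_right e (real_inner_self_I_mul _))
  have horth : ⟪u x, e • (Complex.I * u x)⟫_ℝ = 0 := by
    rw [real_inner_smul_right, real_inner_self_I_mul, mul_zero]
  rw [Finset.sum_congr rfl fun i _ => hpartial i, Finset.sum_const_zero, add_zero,
    sum_partialDeriv_partialDeriv, hs.lap_eq, inner_sub_left, inner_add_left,
    real_inner_smul_left, horth, real_inner_self_eq_norm_sq, norm_smul, norm_mul,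
    Complex.norm_I, one_mul, mul_pow, Real.norm_eq_abs, sq_abs, mul_zero, zero_add]

lemma integrable_potential_mul_norm_sq (hs : IsResolventSolution V e τ u f) (hd : 1 < d) :
    Integrable fun x => V x * ‖u x‖ ^ 2 := by
  have := Fin.pos_iff_nonempty.1 (one_pos.trans hd)
  refine ⟨aestronglyMeasurable_of_continuousOn_compl_singleton
    (hs.contDiffOn_potential.continuousOn.mul (hs.contDiff.continuous.norm.pow 2).continuousOn),
    lt_of_le_of_lt (lintegral_mono fun x => ?_) ((hs.energy_le hd).trans_lt ofReal_lt_top)⟩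
  have hV := hs.potential_nonneg x
  rw [Real.enorm_of_nonneg (by positivity)]
  exact ofReal_le_ofReal (le_add_of_nonneg_left (by positivity))

lemma memLp_norm_div_norm (hs : IsResolventSolution V e τ u f) (hd : 2 < d) :
    MemLp (fun x => ‖u x‖ / ‖x‖) 2 := by
  have hquotient : Integrable fun x => ‖u x‖ ^ 2 / ‖x‖ ^ 2 :=
    integrable_div_norm_pow (by simpa using hd) (hs.contDiff.continuous.norm.pow 2)
      (hs.memLp.integrable_norm_pow two_ne_zero)
  refine (memLp_two_iff_integrable_sq
    (hs.contDiff.continuous.norm.measurable.div measurable_norm).aestronglyMeasurable).2 ?_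
  simpa only [Pi.div_apply, div_pow] using hquotient

lemma integrable_inner_source_div_norm (hs : IsResolventSolution V e τ u f) (hd : 2 < d) :
    Integrable fun x => ⟪f x, u x⟫_ℝ / ‖x‖ := by
  refine (hs.memLp_source.norm.integrable_mul (hs.memLp_norm_div_norm hd)).mono
    ((hs.memLp_source.1.inner hs.memLp.1).aemeasurable.div
      measurable_norm.aemeasurable).aestronglyMeasurable (ae_of_all _ fun x => ?_)
  have hinner := abs_real_inner_le_norm (f x) (u x)
  simp only [norm_div, Pi.mul_apply, norm_mul, Real.norm_eq_abs, abs_norm]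
  rw [← mul_div_assoc]
  gcongr

/-- Near the origin, where `V` may be singular, `V |u|²` is read off from the equation. -/
lemma integrable_potential_mul_norm_sq_div_norm (hs : IsResolventSolution V e τ u f)
    (hd : 2 < d) : Integrable fun x => V x * ‖u x‖ ^ 2 / ‖x‖ := by
  have hcont : Continuous fun x => ⟪lap u x, u x⟫_ℝ + τ * ‖u x‖ ^ 2 :=
    ((continuous_lap hs.contDiff).inner hs.contDiff.continuous).add
      (continuous_const.mul (hs.contDiff.continuous.norm.pow 2))
  have hball := (integrableOn_ball_div_norm_pow (n := 1) (by simpa using (by lia : 1 < d)) hcont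
    1).add (hs.integrable_inner_source_div_norm hd).integrableOn
  simp only [pow_one] at hball
  simpa only [pow_one] using integrable_div_norm_pow_of_integrableOn_ball (n := 1)
    (hball.congr_fun (fun x _ => by simp only [Pi.add_apply, hs.inner_lap_self, pow_one]; ring)
      measurableSet_ball) (hs.integrable_potential_mul_norm_sq (by lia))

lemma integrable_morawetzFlux_div_norm (hs : IsResolventSolution V e τ u f) (hd : 3 < d)
    {k h : Ed d → ℝ} (hk : ContDiffOn ℝ 1 k {0}ᶜ) (hh : ContDiffOn ℝ 1 h {0}ᶜ)
    (hk2 : ∀ x, x ≠ 0 → |k x| * ‖x‖ ≤ 2) (hh2 : ∀ x, x ≠ 0 → |h x| * ‖x‖ ^ 3 ≤ 2) (i : Fin d) :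
    Integrable fun x => morawetzFlux k h (fun y => V y - τ) u i x / ‖x‖ := by
  have := Fin.pos_iff_nonempty.1 (by lia : 0 < d)
  have hu := hs.contDiff
  have hu2 := hs.memLp.integrable_norm_pow two_ne_zero
  have hpow {n : ℕ} (hn : n < d) : Integrable fun x => ‖u x‖ ^ 2 / ‖x‖ ^ n :=
    integrable_div_norm_pow (by simpa using hn) (hu.continuous.norm.pow 2) hu2
  have hgrad : Integrable fun x => gradNorm u x ^ 2 / ‖x‖ ^ 1 :=
    integrable_div_norm_pow (by simpa using (by lia : 1 < d)) ((continuous_gradNorm hu).pow 2)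
      hs.memLp_gradNorm.integrable_sq
  have hmaj := ((hgrad.const_mul (3 + ((d : ℝ) - 1) / 2)).add
    ((hs.integrable_potential_mul_norm_sq_div_norm (by lia)).add
      ((hpow (n := 1) (by lia)).const_mul |τ|))).add ((hpow hd).const_mul ((d : ℝ) - 1))
  refine hmaj.mono' (aestronglyMeasurable_of_continuousOn_compl_singleton
    (((contDiffOn_morawetzFlux hu hk hh (hs.contDiffOn_potential.sub contDiffOn_const)
      i).continuousOn).div continuous_norm.continuousOn fun x hx => norm_ne_zero_iff.2 hx)) ?_
  filter_upwards [Measure.ae_ne _ 0] with x hx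
  refine (abs_morawetzFlux_div_norm_le hx (hk2 x hx) (hh2 x hx) u i).trans ?_
  have hW : |V x - τ| ≤ V x + |τ| :=
    (abs_sub _ _).trans_eq (by rw [abs_of_nonneg (hs.potential_nonneg x)])
  calc _ ≤ (3 + ((d : ℝ) - 1) / 2) * (gradNorm u x ^ 2 / ‖x‖)
        + (V x + |τ|) * ‖u x‖ ^ 2 / ‖x‖ + ((d : ℝ) - 1) * (‖u x‖ ^ 2 / ‖x‖ ^ 3) := by gcongr
    _ = _ := by simp only [Pi.add_apply, pow_one]; ring

end IsResolventSolution

end ResolventEquation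

section MorawetzEstimate

variable {d : ℕ}

lemma sub_one_mul_sub_three_pos (hd : 3 < d) : 0 < ((d : ℝ) - 1) * (d - 3) := by
  have hd' : (3 : ℝ) < d := mod_cast hd
  nlinarith

/-- A pointwise bound, up to the weight, for the source `f - i e u` tested against the Morawetz
multiplier. -/
def morawetzSource (e : ℝ) (u f : Ed d → ℂ) (x : Ed d) : ℝ :=
  2 * (‖f x‖ * gradNorm u x + ((d : ℝ) - 1) / 2 * (‖f x‖ * (‖u x‖ / ‖x‖))
    + |e| * (‖u x‖ * gradNorm u x))

lemma abs_inner_morawetzMultiplier_le (hd : 0 < d) (e : ℝ) (u f : Ed d → ℂ) (x : Ed d) :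
    |⟪f x - e • (Complex.I * u x), morawetzMultiplier u x⟫_ℝ| ≤
      ‖f x‖ * (‖x‖ * gradNorm u x + ((d : ℝ) - 1) / 2 * ‖u x‖)
        + |e| * (‖u x‖ * (‖x‖ * gradNorm u x)) := by
  have hrotation : ⟪Complex.I * u x, morawetzMultiplier u x⟫_ℝ =
      ⟪Complex.I * u x, fderiv ℝ u x x⟫_ℝ := by
    rw [morawetzMultiplier, inner_add_right, real_inner_smul_right,
      real_inner_comm (u x) (Complex.I * u x), real_inner_self_I_mul, mul_zero, add_zero]
  rw [inner_sub_left, real_inner_smul_left, hrotation]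
  refine (abs_sub _ _).trans (add_le_add ?_ ?_)
  · refine (abs_real_inner_le_norm _ _).trans ?_
    gcongr
    exact norm_morawetzMultiplier_le hd u x
  · rw [abs_mul]
    gcongr
    refine (abs_real_inner_le_norm _ _).trans ?_
    rw [norm_mul, Complex.norm_I, one_mul]
    gcongr
    exact norm_fderiv_self_le u x

lemma abs_mul_inner_morawetzMultiplier_le_morawetzSource (hd : 0 < d) {k : ℝ} {x : Ed d}
    (hx : x ≠ 0) (hk : |k| * ‖x‖ ≤ 2) (e : ℝ) (u f : Ed d → ℂ) :
    |k * ⟪f x - e • (Complex.I * u x), morawetzMultiplier u x⟫_ℝ| ≤ morawetzSource e u f x := by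
  have hr : 0 < ‖x‖ := norm_pos_iff.2 hx
  rw [abs_mul]
  refine (mul_le_mul ((le_div_iff₀ hr).2 hk) (abs_inner_morawetzMultiplier_le hd e u f x)
    (abs_nonneg _) (by positivity)).trans_eq ?_
  rw [morawetzSource]
  field_simp

namespace IsResolventSolution

variable {V : Ed d → ℝ} {γ η δ e τ : ℝ} {u f : Ed d → ℂ}

lemma integrable_morawetzSource (hs : IsResolventSolution V e τ u f) (hd : 2 < d) :
    Integrable (morawetzSource e u f) :=
  (((hs.memLp_source.norm.integrable_mul hs.memLp_gradNorm).add
    ((hs.memLp_source.norm.integrable_mul (hs.memLp_norm_div_norm hd)).const_mul _)).add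
    ((hs.memLp.norm.integrable_mul hs.memLp_gradNorm).const_mul |e|)).const_mul 2

lemma sum_partialDeriv_morawetzFlux_morawetzWeight (hs : IsResolventSolution V e τ u f) (R : ℝ)
    {x : Ed d} (hx : x ≠ 0) :
    ∑ i, partialDeriv (morawetzFlux (morawetzWeight δ R 1) (morawetzWeight δ R 3)
        (fun y => V y - τ) u i) i x =
      morawetzForm (morawetzWeight δ R 1 x) (morawetzWeight δ R 3 x)
        (3 * morawetzWeight δ R 5 x) (fun y => V y - τ) u x -
      morawetzWeight δ R 1 x * ⟪f x - e • (Complex.I * u x), morawetzMultiplier u x⟫_ℝ := by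
  have hW : DifferentiableAt ℝ (fun y => V y - τ) x :=
    ((hs.contDiffOn_potential.contDiffAt (isOpen_compl_singleton.mem_nhds hx)).differentiableAt
      one_ne_zero).sub_const τ
  have hk := hasFDerivAt_morawetzWeight δ R 1 hx
  have hh := hasFDerivAt_morawetzWeight δ R 3 hx
  have hsource : lap u x - (V x - τ) • u x = -(f x - e • (Complex.I * u x)) := by
    rw [hs.lap_eq]
    abel
  rw [Nat.cast_one, one_mul] at hk
  rw [sum_partialDeriv_morawetzFlux hs.contDiff hk hh hW, sum_partialDeriv_partialDeriv, hsource,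
    inner_neg_left]
  push_cast
  ring

lemma integrable_mul_inner_morawetzMultiplier (hs : IsResolventSolution V e τ u f) (hd : 2 < d)
    {k : Ed d → ℝ} (hk : ContinuousOn k {0}ᶜ) (hk2 : ∀ x, x ≠ 0 → |k x| * ‖x‖ ≤ 2) :
    Integrable fun x =>
      k x * ⟪f x - e • (Complex.I * u x), morawetzMultiplier u x⟫_ℝ := by
  have := Fin.pos_iff_nonempty.1 (by lia : 0 < d)
  have hf := hs.continuousOn_source
  have hu := hs.contDiff.continuous.continuousOn (s := {0}ᶜ)
  have hmultiplier := (contDiff_morawetzMultiplier hs.contDiff).continuous.continuousOn (s := {0}ᶜ)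
  refine (hs.integrable_morawetzSource hd).mono'
    (aestronglyMeasurable_of_continuousOn_compl_singleton (by fun_prop)) ?_
  filter_upwards [Measure.ae_ne _ 0] with x hx
  exact abs_mul_inner_morawetzMultiplier_le_morawetzSource (by lia) hx (hk2 x hx) e u f

theorem lintegral_le_lintegral_morawetzSource (hs : IsResolventSolution V e τ u f)
    (hV : IsRepulsive γ η V) (hd : 3 < d) (hτ : 0 ≤ τ) (hδ : 0 ≤ δ) (hδ1 : δ ≤ 1)
    (hδγ : δ ≤ γ / 2) (hδη : δ ≤ η / 2) (R : ℝ) :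
    ∫⁻ x, .ofReal (δ / 2 * (R ^ 2 * smoothInvNorm R x ^ 3) *
            (gradNorm u x ^ 2 + τ * ‖u x‖ ^ 2)
          + γ / 4 * (V x * ‖u x‖ ^ 2 * ‖x‖⁻¹)
          + η * (((d : ℝ) - 1) * (d - 3) / 8) * (‖u x‖ ^ 2 * ‖x‖⁻¹ ^ 3)) ≤
      ∫⁻ x, .ofReal (morawetzSource e u f x) := by
  have := Fin.pos_iff_nonempty.1 (by lia : 0 < d)
  have hweight (n : ℕ) {x : Ed d} (hx : x ≠ 0) : |morawetzWeight δ R n x| * ‖x‖ ^ n ≤ 2 := by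
    rw [abs_of_nonneg (morawetzWeight_nonneg hδ R n x)]
    exact morawetzWeight_mul_norm_pow_le_two hδ1 R n hx
  have hform {x : Ed d} (hx : x ≠ 0) := hV.le_morawetzForm_morawetzWeight (τ := τ) hd.le hδ hδγ
    hδη R u hx (hs.potential_nonneg x)
  have hk {x : Ed d} (hx : x ≠ 0) : |morawetzWeight δ R 1 x| * ‖x‖ ≤ 2 := by
    simpa using hweight 1 hx
  have hdivergence := lintegral_ofReal_le_of_sum_fderiv_eq_sub
    (v := fun i => EuclideanSpace.single i 1)
    (fun i => contDiffOn_morawetzFlux hs.contDiff (contDiffOn_morawetzWeight δ R 1)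
      (contDiffOn_morawetzWeight δ R 3) (hs.contDiffOn_potential.sub contDiffOn_const) i)
    (hs.integrable_morawetzFlux_div_norm hd (contDiffOn_morawetzWeight δ R 1)
      (contDiffOn_morawetzWeight δ R 3) (fun x => hk) fun x => hweight 3)
    (fun x hx => ?_)
    (hs.integrable_mul_inner_morawetzMultiplier (by lia)
      (contDiffOn_morawetzWeight δ R 1).continuousOn fun x => hk)
    (fun x => hs.sum_partialDeriv_morawetzFlux_morawetzWeight R)
  · calc _ ≤ ∫⁻ x, .ofReal (morawetzForm (morawetzWeight δ R 1 x) (morawetzWeight δ R 3 x)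
            (3 * morawetzWeight δ R 5 x) (fun y => V y - τ) u x) :=
          lintegral_mono_ae ((Measure.ae_ne _ 0).mono fun x hx => ofReal_le_ofReal (hform hx))
      _ ≤ _ := hdivergence.trans (ofReal_integral_le_lintegral_enorm _)
      _ ≤ _ := lintegral_mono_ae ((Measure.ae_ne _ 0).mono fun x hx => by
          rw [← ofReal_norm]
          exact ofReal_le_ofReal
            (abs_mul_inner_morawetzMultiplier_le_morawetzSource (by lia) hx (hk hx) e u f))
  · refine le_trans ?_ (hform hx)
    have hVx := hs.potential_nonneg x
    have hq := smoothInvNorm_pos R hx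
    have hN := sub_one_mul_sub_three_pos hd
    have hγ : 0 ≤ γ := by linarith
    have hη : 0 ≤ η := by linarith
    positivity

end IsResolventSolution

end MorawetzEstimate

section MorreyCampanato

lemma le_mul_rpow_half_iff {a b c : ℝ≥0∞} : a ≤ b * c ^ (1 / 2 : ℝ) ↔ a ^ 2 ≤ b ^ 2 * c := by
  rw [← ENNReal.pow_le_pow_left_iff two_ne_zero, mul_pow, ← ENNReal.rpow_natCast (c ^ (1 / 2 : ℝ)),
    ← ENNReal.rpow_mul]
  norm_num

lemma sq_lintegral_mul_le {α : Type*} [MeasurableSpace α] {μ : Measure α} {g h : α → ℝ≥0∞}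
    (hg : AEMeasurable g μ) (hh : AEMeasurable h μ) :
    (∫⁻ x, g x * h x ∂μ) ^ 2 ≤ (∫⁻ x, g x ^ 2 ∂μ) * ∫⁻ x, h x ^ 2 ∂μ := by
  have hHolder := ENNReal.lintegral_mul_le_Lp_mul_Lq μ Real.HolderConjugate.two_two hg hh
  simp only [Pi.mul_apply, ENNReal.rpow_two] at hHolder
  rw [← one_mul ((∫⁻ x, g x ^ 2 ∂μ) * _), ← one_pow 2, ← le_mul_rpow_half_iff, one_mul,
    ENNReal.mul_rpow_of_nonneg _ _ one_half_pos.le]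
  exact hHolder

lemma setLIntegral_ofReal_le_ofReal_mul {α : Type*} [MeasurableSpace α] {μ : Measure α}
    {s : Set α} (hs : MeasurableSet s) {g h : α → ℝ} {c : ℝ} (hc : 0 ≤ c)
    (hgh : ∀ᵐ x ∂μ, x ∈ s → g x ≤ c * h x) :
    ∫⁻ x in s, .ofReal (g x) ∂μ ≤ .ofReal c * ∫⁻ x, .ofReal (h x) ∂μ := by
  rw [← lintegral_const_mul' _ _ ofReal_ne_top]
  refine (setLIntegral_mono_ae' hs ?_).trans (setLIntegral_le_lintegral s _)
  filter_upwards [hgh] with x hx hxs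
  rw [← ofReal_mul hc]
  exact ofReal_le_ofReal (hx hxs)

variable {d : ℕ}

lemma setLIntegral_ball_le_mul_nX2 (g : Ed d → ℝ≥0∞) {R : ℝ} (hR : 0 < R) :
    ∫⁻ x in ball 0 R, g x ≤ .ofReal R * nX2 g := by
  rw [← ENNReal.inv_mul_le_iff (ofReal_pos.2 hR).ne' ofReal_ne_top]
  exact le_iSup₂ (f := fun (R : ℝ) (_ : 0 < R) =>
    (ENNReal.ofReal R)⁻¹ * ∫⁻ x in ball (0 : Ed d) R, g x) R hR

lemma nX2_le {g : Ed d → ℝ≥0∞} {M : ℝ≥0∞}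
    (h : ∀ R : ℝ, 0 < R → ∫⁻ x in ball 0 R, g x ≤ .ofReal R * M) : nX2 g ≤ M :=
  iSup₂_le fun R hR =>
    (ENNReal.inv_mul_le_iff (ofReal_pos.2 hR).ne' ofReal_ne_top).2 (h R hR)

lemma nX2_mono {g h : Ed d → ℝ≥0∞} (hgh : ∀ x, g x ≤ h x) : nX2 g ≤ nX2 h :=
  nX2_le fun _ hR => (lintegral_mono hgh).trans (setLIntegral_ball_le_mul_nX2 h hR)

lemma const_mul_nX2 {c : ℝ≥0∞} (hc : c ≠ ⊤) (g : Ed d → ℝ≥0∞) :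
    c * nX2 g = nX2 fun x => c * g x := by
  simp only [nX2, ENNReal.mul_iSup, lintegral_const_mul' c _ hc, mul_left_comm]

lemma iSup_setLIntegral_ball_le_lintegral_div (n : ℕ) (g : Ed d → ℝ≥0∞) :
    ⨆ (R : ℝ) (_ : 0 < R), (ENNReal.ofReal (R ^ n))⁻¹ * ∫⁻ x in ball (0 : Ed d) R, g x ≤
      ∫⁻ x, g x / .ofReal (‖x‖ ^ n) := by
  refine iSup₂_le fun R hR => ?_
  rw [← lintegral_const_mul' _ _ (inv_ne_top.2 (ofReal_pos.2 (pow_pos hR n)).ne')]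
  refine (setLIntegral_mono' measurableSet_ball fun x hx => ?_).trans
    (setLIntegral_le_lintegral (ball 0 R) _)
  rw [mul_comm, ← div_eq_mul_inv]
  gcongr
  exact (mem_ball_zero_iff.1 hx).le

lemma nX2_le_lintegral_div_norm (g : Ed d → ℝ≥0∞) : nX2 g ≤ ∫⁻ x, g x / .ofReal ‖x‖ := by
  simpa only [nX2, pow_one] using iSup_setLIntegral_ball_le_lintegral_div 1 g

lemma compl_singleton_zero_subset_iUnion_shell : {(0 : Ed d)}ᶜ ⊆ ⋃ j : ℤ, shell d j := fun _ hx =>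
  mem_iUnion.2 (exists_mem_Ioc_zpow (norm_pos_iff.2 hx) one_lt_two)

lemma setLIntegral_shell_le (g : Ed d → ℝ≥0∞) (j : ℤ) :
    ∫⁻ x in shell d j, g x ≤ .ofReal ((2 : ℝ) ^ (j + 1)) * (2 * nX2 g) := by
  have hj : (0 : ℝ) < 2 ^ (j + 1) := by positivity
  calc ∫⁻ x in shell d j, g x ≤ ∫⁻ x in ball 0 (2 ^ (j + 1) * 2), g x :=
        lintegral_mono_set fun x hx => mem_ball_zero_iff.2 (by linarith [hx.2])
    _ ≤ .ofReal (2 ^ (j + 1) * 2) * nX2 g := setLIntegral_ball_le_mul_nX2 g (by positivity)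
    _ = .ofReal (2 ^ (j + 1)) * (2 * nX2 g) := by
        rw [ofReal_mul hj.le, ofReal_ofNat, mul_assoc]

/-- Cauchy–Schwarz on every dyadic shell. -/
lemma lintegral_mul_le_nXstar_mul_nX2 (hd : 0 < d) {g h : Ed d → ℝ≥0∞} (hg : AEMeasurable g)
    (hh : AEMeasurable h) :
    ∫⁻ x, g x * h x ≤ nXstar (fun x => g x ^ 2) * (2 * nX2 fun x => h x ^ 2) ^ (1 / 2 : ℝ) := by
  have := Fin.pos_iff_nonempty.1 hd
  calc ∫⁻ x, g x * h x = ∫⁻ x in ⋃ j : ℤ, shell d j, g x * h x := by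
        rw [Measure.restrict_eq_self_of_ae_mem]
        filter_upwards [Measure.ae_ne volume 0] with x hx
        exact compl_singleton_zero_subset_iUnion_shell hx
    _ ≤ ∑' j : ℤ, ∫⁻ x in shell d j, g x * h x := lintegral_iUnion_le _ _
    _ ≤ _ := by
        rw [nXstar, ← ENNReal.tsum_mul_right]
        refine ENNReal.tsum_le_tsum fun j => ?_
        rw [← ENNReal.mul_rpow_of_nonneg _ _ one_half_pos.le, ← one_mul ((_ * _) ^ _),
          le_mul_rpow_half_iff, one_pow, one_mul, mul_comm (ENNReal.ofReal _), mul_assoc]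
        refine (sq_lintegral_mul_le hg.restrict hh.restrict).trans ?_
        gcongr
        exact setLIntegral_shell_le _ j

lemma usq_eq_ofReal (u : Ed d → ℂ) (x : Ed d) : usq u x = .ofReal (‖u x‖ ^ 2) := by
  rw [ofReal_pow (norm_nonneg _), ofReal_norm, usq, enorm_eq_nnnorm]

lemma gradSq_eq_ofReal (u : Ed d → ℂ) (x : Ed d) : gradSq u x = .ofReal (gradNorm u x ^ 2) := by
  rw [gradNorm_sq, ofReal_sum_of_nonneg fun i _ => by positivity]
  simp only [gradSq, ofReal_pow (norm_nonneg _), ofReal_norm, enorm_eq_nnnorm]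
  rfl

lemma enorm_gradNorm_sq (u : Ed d → ℂ) (x : Ed d) : ‖gradNorm u x‖ₑ ^ 2 = gradSq u x := by
  rw [gradSq_eq_ofReal, Real.enorm_of_nonneg (gradNorm_nonneg u x),
    ofReal_pow (gradNorm_nonneg u x)]

lemma memLp_two_of_lintegral_usq_lt_top {u : Ed d → ℂ} (hu : AEStronglyMeasurable u)
    (hu2 : ∫⁻ x, usq u x < ⊤) : MemLp u 2 := by
  refine ⟨hu, (eLpNorm_lt_top_iff_lintegral_rpow_enorm_lt_top two_ne_zero ofNat_ne_top).2 ?_⟩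
  simpa [usq, enorm_eq_nnnorm] using hu2

lemma memLp_two_gradNorm_of_lintegral_gradSq_lt_top {u : Ed d → ℂ} (hu : ContDiff ℝ 2 u)
    (hu2 : ∫⁻ x, gradSq u x < ⊤) : MemLp (gradNorm u) 2 := by
  refine ⟨(continuous_gradNorm hu).aestronglyMeasurable,
    (eLpNorm_lt_top_iff_lintegral_rpow_enorm_lt_top two_ne_zero ofNat_ne_top).2 ?_⟩
  simpa [enorm_gradNorm_sq] using hu2

end MorreyCampanato

section MainTerms

namespace IsResolventSolution

variable {d : ℕ} {V : Ed d → ℝ} {γ η δ e τ : ℝ} {u f : Ed d → ℂ}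

lemma nX2_ofReal_gradNorm_sq_add_le (hs : IsResolventSolution V e τ u f) (hV : IsRepulsive γ η V)
    (hd : 3 < d) (hτ : 0 ≤ τ) (hδ : 0 < δ) (hδ1 : δ ≤ 1) (hδγ : δ ≤ γ / 2) (hδη : δ ≤ η / 2) :
    nX2 (fun x => .ofReal (gradNorm u x ^ 2 + τ * ‖u x‖ ^ 2)) ≤
      .ofReal (6 / δ) * ∫⁻ x, .ofReal (morawetzSource e u f x) := by
  have := Fin.pos_iff_nonempty.1 (by lia : 0 < d)
  refine nX2_le fun R hR => ?_
  rw [← mul_assoc, ← ofReal_mul hR.le]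
  refine (setLIntegral_ofReal_le_ofReal_mul measurableSet_ball (by positivity) ?_).trans
    (mul_le_mul_right (hs.lintegral_le_lintegral_morawetzSource hV hd hτ hδ.le hδ1 hδγ hδη R) _)
  filter_upwards [Measure.ae_ne _ 0] with x hx hxR
  have hweight := one_le_mul_smoothInvNorm_pow_three hx (mem_ball_zero_iff.1 hxR)
  have hVx := hs.potential_nonneg x
  have hγ : 0 ≤ γ := by linarith
  have hη : 0 ≤ η := by linarith
  have hN := sub_one_mul_sub_three_pos hd
  calc gradNorm u x ^ 2 + τ * ‖u x‖ ^ 2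
      ≤ 3 * R * (R ^ 2 * smoothInvNorm R x ^ 3) * (gradNorm u x ^ 2 + τ * ‖u x‖ ^ 2) :=
        le_mul_of_one_le_left (by positivity) hweight
    _ = R * (6 / δ) * (δ / 2 * (R ^ 2 * smoothInvNorm R x ^ 3) *
          (gradNorm u x ^ 2 + τ * ‖u x‖ ^ 2)) := by field_simp; ring
    _ ≤ _ := by
        rw [add_assoc (δ / 2 * _ * _)]
        gcongr
        exact le_add_of_nonneg_right (by positivity)

lemma lintegral_ofReal_add_le (hs : IsResolventSolution V e τ u f) (hV : IsRepulsive γ η V)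
    (hd : 3 < d) (hτ : 0 ≤ τ) (hγ : 0 ≤ γ) (hη : 0 ≤ η) :
    ∫⁻ x, .ofReal (γ / 4 * (V x * ‖u x‖ ^ 2 * ‖x‖⁻¹)
        + η * (((d : ℝ) - 1) * (d - 3) / 8) * (‖u x‖ ^ 2 * ‖x‖⁻¹ ^ 3)) ≤
      ∫⁻ x, .ofReal (morawetzSource e u f x) := by
  simpa using hs.lintegral_le_lintegral_morawetzSource hV hd hτ le_rfl zero_le_one
    (by positivity) (by positivity) 0

lemma lintegral_potential_div_norm_mul_usq_le (hs : IsResolventSolution V e τ u f)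
    (hV : IsRepulsive γ η V) (hd : 3 < d) (hτ : 0 ≤ τ) (hγ : 0 < γ) (hη : 0 ≤ η) :
    ∫⁻ x, .ofReal (V x / ‖x‖) * usq u x ≤
      .ofReal (4 / γ) * ∫⁻ x, .ofReal (morawetzSource e u f x) := by
  refine le_trans ?_ (mul_le_mul_right (hs.lintegral_ofReal_add_le hV hd hτ hγ.le hη) _)
  have hN := sub_one_mul_sub_three_pos hd
  simp only [usq_eq_ofReal, ← ofReal_mul (div_nonneg (hs.potential_nonneg _) (norm_nonneg _))]
  rw [← setLIntegral_univ]
  refine setLIntegral_ofReal_le_ofReal_mul .univ (by positivity) (ae_of_all _ fun x _ => ?_)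
  calc V x / ‖x‖ * ‖u x‖ ^ 2 = 4 / γ * (γ / 4 * (V x * ‖u x‖ ^ 2 * ‖x‖⁻¹)) := by field_simp
    _ ≤ _ := by gcongr; exact le_add_of_nonneg_right (by positivity)

lemma lintegral_usq_div_norm_pow_three_le (hs : IsResolventSolution V e τ u f)
    (hV : IsRepulsive γ η V) (hd : 3 < d) (hτ : 0 ≤ τ) (hγ : 0 ≤ γ) (hη : 0 < η) :
    ∫⁻ x, usq u x / .ofReal (‖x‖ ^ 3) ≤
      .ofReal (8 / (η * (((d : ℝ) - 1) * (d - 3)))) *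
        ∫⁻ x, .ofReal (morawetzSource e u f x) := by
  have := Fin.pos_iff_nonempty.1 (by lia : 0 < d)
  refine le_trans ?_ (mul_le_mul_right (hs.lintegral_ofReal_add_le hV hd hτ hγ hη.le) _)
  have hN := sub_one_mul_sub_three_pos hd
  calc ∫⁻ x, usq u x / .ofReal (‖x‖ ^ 3) = ∫⁻ x, .ofReal (‖u x‖ ^ 2 / ‖x‖ ^ 3) := by
        refine lintegral_congr_ae ?_
        filter_upwards [Measure.ae_ne _ 0] with x hx
        rw [usq_eq_ofReal, ofReal_div_of_pos (pow_pos (norm_pos_iff.2 hx) 3)]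
    _ ≤ _ := by
        rw [← setLIntegral_univ]
        refine setLIntegral_ofReal_le_ofReal_mul .univ (by positivity) (ae_of_all _ fun x _ => ?_)
        have hVx := hs.potential_nonneg x
        calc ‖u x‖ ^ 2 / ‖x‖ ^ 3 = 8 / (η * (((d : ℝ) - 1) * (d - 3))) *
              (η * (((d : ℝ) - 1) * (d - 3) / 8) * (‖u x‖ ^ 2 * ‖x‖⁻¹ ^ 3)) := by
              rw [← mul_assoc, ← mul_div_assoc, div_mul_div_cancel₀ (by positivity)]
              ring
          _ ≤ _ := by gcongr; exact le_add_of_nonneg_left (by positivity)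

end IsResolventSolution

end MainTerms

section Absorption

lemma enorm_real_inner_le {F : Type*} [NormedAddCommGroup F] [InnerProductSpace ℝ F] (v w : F) :
    ‖⟪v, w⟫_ℝ‖ₑ ≤ ‖v‖ₑ * ‖w‖ₑ := by
  simpa only [enorm_eq_nnnorm, ← ENNReal.coe_mul, ENNReal.coe_le_coe] using
    nnnorm_inner_le_nnnorm (𝕜 := ℝ) v w

/-- Young's inequality, weighted so that `N` is left with the factor `1 / 2`. -/
lemma le_four_mul_sq_add_half_of_le_mul_rpow_half {T X N : ℝ≥0∞} (hT : T ≠ ⊤)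
    (h : T ≤ X * (2 * (T + N)) ^ (1 / 2 : ℝ)) : T ≤ 4 * X ^ 2 + N / 2 := by
  rcases eq_or_ne X ⊤ with rfl | hX
  · simp
  rcases eq_or_ne N ⊤ with rfl | hN
  · simp [ENNReal.top_div_of_ne_top]
  rw [le_mul_rpow_half_iff] at h
  lift T to NNReal using hT
  lift X to NNReal using hX
  lift N to NNReal using hN
  norm_cast at h ⊢
  rw [← NNReal.coe_le_coe] at h ⊢
  push_cast at h ⊢
  by_contra! hlt
  have hpos : 0 < (T + N : ℝ) := by
    have hT : (0 : ℝ) < T := lt_of_le_of_lt (by positivity) hlt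
    positivity
  nlinarith [mul_lt_mul_of_pos_right hlt hpos, sq_nonneg (T - N / 4 : ℝ)]

namespace IsResolventSolution

variable {d : ℕ} {V : Ed d → ℝ} {γ η e τ : ℝ} {u f : Ed d → ℂ}

lemma lintegral_ofReal_morawetzSource (hs : IsResolventSolution V e τ u f) (hd : 0 < d) :
    ∫⁻ x, .ofReal (morawetzSource e u f x) =
      2 * ((∫⁻ x, ‖f x‖ₑ * ‖gradNorm u x‖ₑ)
        + .ofReal (((d : ℝ) - 1) / 2) * (∫⁻ x, ‖f x‖ₑ * ‖‖u x‖ / ‖x‖‖ₑ)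
        + .ofReal |e| * ∫⁻ x, ‖u x‖ₑ * ‖gradNorm u x‖ₑ) := by
  have hf := hs.memLp_source.1.enorm
  have hu := hs.memLp.1.enorm
  have hgrad := hs.memLp_gradNorm.1.enorm
  have hc : 0 ≤ ((d : ℝ) - 1) / 2 := by
    have hd' : (1 : ℝ) ≤ d := mod_cast hd
    linarith
  rw [← lintegral_const_mul' _ _ ofReal_ne_top, ← lintegral_const_mul' _ _ ofReal_ne_top,
    ← lintegral_add_left' (hf.fun_mul hgrad),
    ← lintegral_add_right' _ ((hu.fun_mul hgrad).const_mul _),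
    ← lintegral_const_mul' _ _ ofNat_ne_top]
  refine lintegral_congr fun x => ?_
  have hgrad0 := gradNorm_nonneg u x
  simp only [← ofReal_norm, norm_norm, Real.norm_of_nonneg hgrad0, norm_div]
  rw [← ofReal_mul (norm_nonneg _), ← ofReal_mul (norm_nonneg _), ← ofReal_mul (norm_nonneg _),
    ← ofReal_mul hc, ← ofReal_mul (abs_nonneg e), ← ofReal_add (by positivity) (by positivity),
    ← ofReal_add (by positivity) (by positivity), morawetzSource, ofReal_mul zero_le_two,
    ofReal_ofNat]

lemma ofReal_abs_mul_lintegral_usq_le (hs : IsResolventSolution V e τ u f) (hd : 1 < d) :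
    .ofReal |e| * ∫⁻ x, usq u x ≤ ∫⁻ x, ‖f x‖ₑ * ‖u x‖ₑ := by
  rcases eq_or_ne e 0 with rfl | he
  · simp
  rw [← ENNReal.mul_le_mul_iff_right (ofReal_pos.2 (abs_pos.2 he)).ne' ofReal_ne_top,
    ← lintegral_const_mul' _ _ ofReal_ne_top, ← lintegral_const_mul' _ _ ofReal_ne_top,
    ← lintegral_const_mul' _ _ ofReal_ne_top]
  calc _ = ∫⁻ x, .ofReal (e ^ 2 * ‖u x‖ ^ 2) := lintegral_congr fun x => by
        rw [usq_eq_ofReal, ← ofReal_mul (abs_nonneg e), ← ofReal_mul (abs_nonneg e), ← mul_assoc,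
          abs_mul_abs_self, sq e]
    _ ≤ ∫⁻ x, ‖⟪f x, e • (Complex.I * u x)⟫_ℝ‖ₑ :=
        (hs.charge_le hd).trans (ofReal_integral_le_lintegral_enorm _)
    _ ≤ _ := lintegral_mono fun x => (enorm_real_inner_le _ _).trans_eq <| by
        rw [enorm_smul, enorm_mul, Real.enorm_eq_ofReal_abs, enorm_eq_nnnorm Complex.I,
          Complex.nnnorm_I, coe_one, one_mul, mul_left_comm]

lemma lintegral_gradSq_le (hs : IsResolventSolution V e τ u f) (hd : 1 < d) (hτ : 0 ≤ τ) :
    ∫⁻ x, gradSq u x ≤ .ofReal τ * (∫⁻ x, usq u x) + ∫⁻ x, ‖f x‖ₑ * ‖u x‖ₑ := by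
  rw [← lintegral_const_mul' _ _ ofReal_ne_top,
    ← lintegral_add_right' _ (hs.memLp_source.1.enorm.fun_mul hs.memLp.1.enorm)]
  calc ∫⁻ x, gradSq u x ≤ ∫⁻ x, .ofReal (gradNorm u x ^ 2 + V x * ‖u x‖ ^ 2) :=
        lintegral_mono fun x => by
          rw [gradSq_eq_ofReal]
          exact ofReal_le_ofReal (le_add_of_nonneg_right
            (mul_nonneg (hs.potential_nonneg x) (sq_nonneg _)))
    _ ≤ ∫⁻ x, ‖τ * ‖u x‖ ^ 2 + ⟪f x, u x⟫_ℝ‖ₑ :=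
        (hs.energy_le hd).trans (ofReal_integral_le_lintegral_enorm _)
    _ ≤ _ := lintegral_mono fun x => (enorm_add_le _ _).trans <| by
        rw [usq_eq_ofReal, ← ofReal_mul hτ, Real.enorm_of_nonneg (by positivity)]
        gcongr
        exact enorm_real_inner_le _ _

lemma ofReal_abs_mul_lintegral_mul_le (hs : IsResolventSolution V e τ u f) (hd : 1 < d)
    (hτ : 0 ≤ τ) :
    .ofReal |e| * ∫⁻ x, ‖u x‖ₑ * ‖gradNorm u x‖ₑ ≤
      nXstar (usq f) *
        (2 * (.ofReal τ * nX2 (usq u) + .ofReal |e| * nX2 (usq u))) ^ (1 / 2 : ℝ) := by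
  have hcharge := hs.ofReal_abs_mul_lintegral_usq_le hd
  have henergy := hs.lintegral_gradSq_le hd hτ
  have hCS := sq_lintegral_mul_le hs.memLp.1.enorm hs.memLp_gradNorm.1.enorm
  have hduality : (∫⁻ x, ‖f x‖ₑ * ‖u x‖ₑ) ^ 2 ≤ nXstar (usq f) ^ 2 * (2 * nX2 (usq u)) :=
    le_mul_rpow_half_iff.1 (lintegral_mul_le_nXstar_mul_nX2 (by lia)
      hs.memLp_source.1.enorm hs.memLp.1.enorm)
  simp only [enorm_gradNorm_sq] at hCS
  rw [le_mul_rpow_half_iff]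
  set E := ENNReal.ofReal |e|
  set t := ENNReal.ofReal τ
  set Y := ∫⁻ x, usq u x
  set Φ := ∫⁻ x, ‖f x‖ₑ * ‖u x‖ₑ
  calc _ = E ^ 2 * (∫⁻ x, ‖u x‖ₑ * ‖gradNorm u x‖ₑ) ^ 2 := mul_pow _ _ _
    _ ≤ E ^ 2 * (Y * (t * Y + Φ)) := by gcongr; exact hCS.trans (by gcongr; exact le_rfl)
    _ = t * (E * Y) ^ 2 + E * (E * Y * Φ) := by ring
    _ ≤ t * Φ ^ 2 + E * (Φ * Φ) := by gcongr
    _ = (t + E) * Φ ^ 2 := by ring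
    _ ≤ (t + E) * (nXstar (usq f) ^ 2 * (2 * nX2 (usq u))) := by gcongr
    _ = _ := by ring

end IsResolventSolution

end Absorption

section MorawetzNorm

variable {d : ℕ} {V : Ed d → ℝ} {γ η e τ : ℝ} {u f : Ed d → ℂ}

/-- The quantity controlled by the resolvent estimate: the left-hand side of (18) in the paper. -/
def morawetzNorm (V : Ed d → ℝ) (τ : ℝ) (u : Ed d → ℂ) : ℝ≥0∞ :=
  nX2 (gradSq u)
    + ENNReal.ofReal τ * nX2 (usq u)
    + (∫⁻ x, ENNReal.ofReal (V x / ‖x‖) * usq u x)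
    + (⨆ (R : ℝ) (_ : 0 < R), (ENNReal.ofReal (R ^ 3))⁻¹ * ∫⁻ x in ball (0 : Ed d) R, usq u x)
    + nX2 (fun x => ENNReal.ofReal (V x) * usq u x)
    + ENNReal.ofReal ((d : ℝ) - 3) * (∫⁻ x, usq u x / ENNReal.ofReal (‖x‖ ^ 3))

lemma nX2_gradSq_le_morawetzNorm : nX2 (gradSq u) ≤ morawetzNorm V τ u := by
  simp only [morawetzNorm, add_assoc]
  exact le_self_add

lemma ofReal_mul_nX2_usq_le_morawetzNorm :
    .ofReal τ * nX2 (usq u) ≤ morawetzNorm V τ u := by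
  simp only [morawetzNorm, add_assoc]
  exact le_add_left le_self_add

lemma lintegral_usq_div_norm_pow_three_le_morawetzNorm (hd : 3 < d) :
    ∫⁻ x, usq u x / .ofReal (‖x‖ ^ 3) ≤ morawetzNorm V τ u := by
  have hd' : (4 : ℝ) ≤ d := mod_cast hd
  exact (le_mul_of_one_le_left' (one_le_ofReal.2 (by linarith))).trans le_add_self

lemma nX2_ofReal_mul_le_lintegral (hd : 0 < d) (V : Ed d → ℝ) (g : Ed d → ℝ≥0∞) :
    nX2 (fun x => .ofReal (V x) * g x) ≤ ∫⁻ x, .ofReal (V x / ‖x‖) * g x := by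
  have := Fin.pos_iff_nonempty.1 hd
  refine (nX2_le_lintegral_div_norm _).trans (lintegral_congr_ae ?_).le
  filter_upwards [Measure.ae_ne _ 0] with x hx
  rw [ofReal_div_of_pos (norm_pos_iff.2 hx), ENNReal.mul_div_right_comm]

namespace IsResolventSolution

lemma exists_morawetzNorm_le_mul_lintegral (hd : 3 < d) (hγ : 0 < γ) (hη : 0 < η) :
    ∃ k : ℝ, 0 < k ∧ ∀ {V : Ed d → ℝ} {e τ : ℝ} {u f : Ed d → ℂ},
      IsResolventSolution V e τ u f → IsRepulsive γ η V → 0 ≤ τ →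
      morawetzNorm V τ u ≤ .ofReal k * ∫⁻ x, .ofReal (morawetzSource e u f x) := by
  obtain ⟨δ, hδ, hδ1, hδγ, hδη⟩ : ∃ δ : ℝ, 0 < δ ∧ δ ≤ 1 ∧ δ ≤ γ / 2 ∧ δ ≤ η / 2 :=
    ⟨min 1 (min (γ / 2) (η / 2)), by positivity, min_le_left _ _,
      (min_le_right _ _).trans (min_le_left _ _), (min_le_right _ _).trans (min_le_right _ _)⟩
  obtain ⟨κ, hκ, hcube⟩ : ∃ κ : ℝ, 0 < κ ∧ κ = 8 / (η * (((d : ℝ) - 1) * (d - 3))) :=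
    ⟨_, div_pos (by norm_num) (mul_pos hη (sub_one_mul_sub_three_pos hd)), rfl⟩
  have hd3 : 0 < (d : ℝ) - 3 := sub_pos.2 (mod_cast hd)
  refine ⟨6 / δ + 6 / δ + 4 / γ + κ + 4 / γ + (d - 3) * κ, by positivity,
    fun {V e τ u f} hs hV hτ => ?_⟩
  have henergy := hs.nX2_ofReal_gradNorm_sq_add_le hV hd hτ hδ hδ1 hδγ hδη
  have hpotential := hs.lintegral_potential_div_norm_mul_usq_le hV hd hτ hγ hη.le
  have hcubic := hs.lintegral_usq_div_norm_pow_three_le hV hd hτ hγ.le hη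
  rw [← hcube] at hcubic
  rw [ofReal_add (by positivity) (by positivity), ofReal_add (by positivity) (by positivity),
    ofReal_add (by positivity) (by positivity), ofReal_add (by positivity) (by positivity),
    ofReal_add (by positivity) (by positivity), ofReal_mul hd3.le]
  simp only [add_mul, mul_assoc]
  refine add_le_add (add_le_add (add_le_add (add_le_add (add_le_add ?_ ?_) hpotential)
    ((iSup_setLIntegral_ball_le_lintegral_div 3 _).trans hcubic))
    ((nX2_ofReal_mul_le_lintegral (by lia) V _).trans hpotential)) (mul_le_mul_right hcubic _)
  · refine (nX2_mono fun x => ?_).trans henergy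
    rw [gradSq_eq_ofReal]
    exact ofReal_le_ofReal (le_add_of_nonneg_right (by positivity))
  · rw [const_mul_nX2 ofReal_ne_top]
    refine (nX2_mono fun x => ?_).trans henergy
    rw [usq_eq_ofReal, ← ofReal_mul hτ]
    exact ofReal_le_ofReal (le_add_of_nonneg_left (by positivity))

lemma lintegral_source_mul_norm_div_norm_le (hs : IsResolventSolution V e τ u f) (hd : 2 < d) :
    ∫⁻ x, ‖f x‖ₑ * ‖‖u x‖ / ‖x‖‖ₑ ≤
      nXstar (usq f) * (2 * ∫⁻ x, usq u x / .ofReal (‖x‖ ^ 3)) ^ (1 / 2 : ℝ) := by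
  have := Fin.pos_iff_nonempty.1 (by lia : 0 < d)
  refine (lintegral_mul_le_nXstar_mul_nX2 (by lia) hs.memLp_source.1.enorm
    (hs.memLp_norm_div_norm hd).1.enorm).trans ?_
  change nXstar (usq f) * _ ≤ _
  gcongr
  refine (nX2_le_lintegral_div_norm _).trans (lintegral_congr_ae ?_).le
  filter_upwards [Measure.ae_ne _ 0] with x hx
  have hr := norm_pos_iff.2 hx
  rw [Real.enorm_of_nonneg (by positivity), ← ofReal_pow (by positivity), usq_eq_ofReal,
    ← ofReal_div_of_pos hr, ← ofReal_div_of_pos (by positivity)]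
  congr 1
  field_simp

lemma lintegral_ofReal_morawetzSource_le (hs : IsResolventSolution V e τ u f) (hd : 3 < d)
    (hτ : 0 ≤ τ) :
    ∫⁻ x, .ofReal (morawetzSource e u f x) ≤
      .ofReal (2 * (2 + ((d : ℝ) - 1) / 2)) * nXstar (usq f) *
        (2 * (morawetzNorm V τ u + .ofReal |e| * nX2 (usq u))) ^ (1 / 2 : ℝ) := by
  set B := nXstar (usq f) * (2 * (morawetzNorm V τ u + .ofReal |e| * nX2 (usq u))) ^ (1 / 2 : ℝ)
    with hB
  have hgrad : ∫⁻ x, ‖f x‖ₑ * ‖gradNorm u x‖ₑ ≤ B := by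
    refine (lintegral_mul_le_nXstar_mul_nX2 (by lia) hs.memLp_source.1.enorm
      hs.memLp_gradNorm.1.enorm).trans ?_
    simp only [enorm_gradNorm_sq]
    change nXstar (usq f) * _ ≤ _
    rw [hB]
    gcongr
    exact nX2_gradSq_le_morawetzNorm.trans le_self_add
  have hcubic : ∫⁻ x, ‖f x‖ₑ * ‖‖u x‖ / ‖x‖‖ₑ ≤ B := by
    refine (hs.lintegral_source_mul_norm_div_norm_le (by lia)).trans ?_
    rw [hB]
    gcongr
    exact (lintegral_usq_div_norm_pow_three_le_morawetzNorm hd).trans le_self_add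
  have hcross : .ofReal |e| * ∫⁻ x, ‖u x‖ₑ * ‖gradNorm u x‖ₑ ≤ B := by
    refine (hs.ofReal_abs_mul_lintegral_mul_le (by lia) hτ).trans ?_
    rw [hB]
    gcongr
    exact ofReal_mul_nX2_usq_le_morawetzNorm
  have hd' : (3 : ℝ) < d := mod_cast hd
  calc _ ≤ 2 * (B + .ofReal (((d : ℝ) - 1) / 2) * B + B) := by
        rw [hs.lintegral_ofReal_morawetzSource (by lia)]
        gcongr
    _ = .ofReal (2 * (2 + ((d : ℝ) - 1) / 2)) * B := by
        rw [ofReal_mul zero_le_two, ofReal_add zero_le_two (by linarith), ofReal_ofNat]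
        ring
    _ = _ := (mul_assoc _ _ _).symm

theorem exists_morawetzNorm_le (hd : 3 < d) (hγ : 0 < γ) (hη : 0 < η) :
    ∃ C : ℝ, 0 < C ∧ ∀ {V : Ed d → ℝ} {e τ : ℝ} {u f : Ed d → ℂ},
      IsResolventSolution V e τ u f → IsRepulsive γ η V → 0 ≤ τ →
      morawetzNorm V τ u ≤
        .ofReal C * nXstar (usq f) ^ 2 + .ofReal (1 / 2 * |e|) * nX2 (usq u) := by
  obtain ⟨k, hk, hbound⟩ := exists_morawetzNorm_le_mul_lintegral hd hγ hη
  obtain ⟨c, hc, hcd⟩ : ∃ c : ℝ, 0 < c ∧ c = 2 * (2 + ((d : ℝ) - 1) / 2) :=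
    ⟨_, by have : (3 : ℝ) < d := mod_cast hd; linarith, rfl⟩
  refine ⟨4 * (k * c) ^ 2, by positivity, fun {V e τ u f} hs hV hτ => ?_⟩
  have hfinite : morawetzNorm V τ u ≠ ⊤ := ne_top_of_le_ne_top
    (mul_ne_top ofReal_ne_top (hs.integrable_morawetzSource (by lia)).lintegral_lt_top.ne)
    (hbound hs hV hτ)
  have hsource := hs.lintegral_ofReal_morawetzSource_le hd hτ
  rw [← hcd] at hsource
  have hC : ENNReal.ofReal (4 * (k * c) ^ 2) = 4 * .ofReal (k * c) ^ 2 := by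
    rw [ofReal_mul zero_le_four, ofReal_pow (by positivity), ofReal_ofNat]
  have hhalf : ENNReal.ofReal (1 / 2 * |e|) = .ofReal |e| / 2 := by
    rw [one_div_mul_eq_div, ofReal_div_of_pos two_pos, ofReal_ofNat]
  calc morawetzNorm V τ u
      ≤ 4 * (.ofReal (k * c) * nXstar (usq f)) ^ 2 + .ofReal |e| * nX2 (usq u) / 2 := by
        refine le_four_mul_sq_add_half_of_le_mul_rpow_half hfinite ?_
        rw [ofReal_mul hk.le, mul_assoc (ENNReal.ofReal k), mul_assoc (ENNReal.ofReal k)]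
        exact (hbound hs hV hτ).trans (mul_le_mul_right hsource _)
    _ = _ := by rw [hC, hhalf, mul_pow, mul_assoc, ENNReal.mul_div_right_comm]

lemma of_classical (hd : 0 < d) (hV0 : ∀ x, 0 ≤ V x) (hV : ContDiffOn ℝ 1 V {0}ᶜ)
    (hu : ContDiff ℝ 2 u) (hu2 : ∫⁻ x, usq u x < ⊤) (hgrad : ∫⁻ x, gradSq u x < ⊤)
    (hf : ∫⁻ x, usq f x < ⊤)
    (heq : ∀ x, -lap u x + V x * u x + e * Complex.I * u x - τ * u x = f x) :
    IsResolventSolution V e τ u f := by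
  have := Fin.pos_iff_nonempty.1 hd
  have hfcont : ContinuousOn f {0}ᶜ := by
    have hVcont := hV.continuousOn
    have hucont := hu.continuous.continuousOn (s := {0}ᶜ)
    have hlap := (continuous_lap hu).continuousOn (s := {0}ᶜ)
    rw [← funext heq]
    fun_prop
  exact {
    potential_nonneg := hV0
    contDiffOn_potential := hV
    contDiff := hu
    memLp := memLp_two_of_lintegral_usq_lt_top hu.continuous.aestronglyMeasurable hu2
    memLp_gradNorm := memLp_two_gradNorm_of_lintegral_gradSq_lt_top hu hgrad
    memLp_source := memLp_two_of_lintegral_usq_lt_top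
      (aestronglyMeasurable_of_continuousOn_compl_singleton hfcont) hf
    lap_eq := fun x => by
      rw [← heq x, Complex.real_smul, Complex.real_smul]
      push_cast
      ring }

end IsResolventSolution

end MorawetzNorm

/-- intermediate a priori estimate (estimate (18) of the paper)
for the resolvent equation with a repulsive potential, d > 3, τ ≥ 0. -/
theorem stmt_4 (d : ℕ) (hd : 3 < d) (γ η : ℝ) (hγ : 0 < γ) (hη : 0 < η) :
    ∃ C : ℝ, 0 < C ∧
      ∀ (V : Ed d → ℝ), (∀ x, 0 ≤ V x) → ContDiffOn ℝ 1 V ({(0 : Ed d)}ᶜ) →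
      (∀ x : Ed d, x ≠ 0 →
        γ * V x + ‖x‖ * radialDeriv V x ≤ (1 - η) * ((d:ℝ) - 1) * ((d:ℝ) - 3) / (2 * ‖x‖^2)) →
      ∀ (ε τ : ℝ), ε ≠ 0 → 0 ≤ τ →
      ∀ (σ : ℝ), σ = 1 ∨ σ = -1 →
      ∀ (u f : Ed d → ℂ), ContDiff ℝ 2 u →
      (∫⁻ x, usq u x) < ⊤ → (∫⁻ x, gradSq u x) < ⊤ → (∫⁻ x, usq f x) < ⊤ →
      (∀ x, -lap u x + (V x : ℂ) * u x + (σ : ℂ) * ((ε : ℂ) * Complex.I) * u x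
        - (τ : ℂ) * u x = f x) →
      nX2 (gradSq u)
        + ENNReal.ofReal τ * nX2 (usq u)
        + (∫⁻ x, ENNReal.ofReal (V x / ‖x‖) * usq u x)
        + (⨆ (R : ℝ) (_ : 0 < R),
            (ENNReal.ofReal (R^3))⁻¹ * ∫⁻ x in ball (0 : Ed d) R, usq u x)
        + nX2 (fun x => ENNReal.ofReal (V x) * usq u x)
        + ENNReal.ofReal ((d:ℝ) - 3) * (∫⁻ x, usq u x / ENNReal.ofReal (‖x‖^3))
      ≤ ENNReal.ofReal C * (nXstar (usq f)) ^ 2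
        + ENNReal.ofReal ((1/2) * |ε|) * nX2 (usq u) := by
  obtain ⟨C, hC, hestimate⟩ := IsResolventSolution.exists_morawetzNorm_le hd hγ hη
  refine ⟨C, hC, fun V hV0 hV hrepulsive ε τ _ hτ σ hσ u f hu hu2 hgrad hf heq => ?_⟩
  have hs : IsResolventSolution V (σ * ε) τ u f :=
    .of_classical (by lia) hV0 hV hu hu2 hgrad hf fun x => by
      rw [← heq x]
      push_cast
      ring
  have habs : |σ * ε| = |ε| := by rcases hσ with rfl | rfl <;> simp
  have hbound := hestimate hs hrepulsive hτ
  rwa [habs] at hbound
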